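/- arXiv:1408.2768 — 4 statements merged into one kernel-verified Lean document; each statement's English description precedes it below -/
import Mathlib

section
/- Let f : ℝ → ℝ be a smooth (C^∞) 2π-periodic function with f(x) ≥ 0 for all x, and let h be the periodic Hilbert transform of f (i.e., h is continuous 2π-periodic with ĥ(k) = −i·sgn(k)·f̂(k) for all k ∈ ℤ, where û(k) = (1/2π)∫₀^{2π}u(x)e^{−ikx}dx); assume h is differentiable. Then ∫₀^{2π} f(x)² h′(x) dx ≥ 0. -/
open MeasureTheory

/-- The `k`-th Fourier coefficient of a `2π`-periodic function `u : ℝ → ℝ`: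
`û(k) = (1/2π) ∫₀^{2π} u(x) e^{−ikx} dx`. -/
noncomputable def fourierCoef (u : ℝ → ℝ) (k : ℤ) : ℂ :=
  (1 / (2 * Real.pi) : ℝ) *
    ∫ x in (0:ℝ)..(2 * Real.pi), (u x : ℂ) * Complex.exp (-Complex.I * k * x)

/-- `v` is the periodic Hilbert transform of `u`: `v` is continuous, `2π`-periodic, and
`v̂(k) = −i·sgn(k)·û(k)` for all `k ∈ ℤ`. -/
def IsHilbertTransformOf (v u : ℝ → ℝ) : Prop :=
  Continuous v ∧ Function.Periodic v (2 * Real.pi) ∧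
    ∀ k : ℤ, fourierCoef v k = -Complex.I * (Int.sign k : ℂ) * fourierCoef u k

open Complex in
theorem aux_norm_exp (k : ℤ) (x : ℝ) : ‖cexp (I * k * x)‖ = 1 := by
  have : I * k * x = ((k * x : ℝ) : ℂ) * I := by push_cast; ring
  rw [this, norm_exp_ofReal_mul_I]

theorem aux_bdd {u : ℝ → ℝ} (hu : Continuous u) (hp : Function.Periodic u (2 * Real.pi)) :
    ∃ C, 0 ≤ C ∧ ∀ x, |u x| ≤ C := by
  obtain ⟨C, hC⟩ := (isCompact_Icc (a := (0:ℝ)) (b := 2 * Real.pi)).exists_bound_of_continuousOn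
    hu.continuousOn
  refine ⟨C, (norm_nonneg _).trans (hC 0 ⟨le_rfl, Real.two_pi_pos.le⟩), fun x => ?_⟩
  obtain ⟨y, hy, hxy⟩ := hp.exists_mem_Ico₀ Real.two_pi_pos x
  rw [hxy]
  exact hC y ⟨hy.1, hy.2.le⟩

theorem aux_sum_int {E : Type*} [NormedAddCommGroup E] [NormedSpace ℝ E]
    (F : ℤ → ℝ → E) (hF : ∀ k, Continuous (F k)) (b : ℤ → ℝ) (hb : Summable b)
    (hFb : ∀ k x, ‖F k x‖ ≤ b k) (g : ℝ → E) (hg : ∀ x, HasSum (fun k => F k x) (g x)) :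
    HasSum (fun k => ∫ x in (0:ℝ)..(2 * Real.pi), F k x) (∫ x in (0:ℝ)..(2 * Real.pi), g x) := by
  apply intervalIntegral.hasSum_integral_of_dominated_convergence (fun k _ => b k)
  · exact fun k => (hF k).aestronglyMeasurable
  · exact fun k => Filter.Eventually.of_forall fun x _ => hFb k x
  · exact Filter.Eventually.of_forall fun x _ => hb
  · exact intervalIntegrable_const
  · exact Filter.Eventually.of_forall fun x _ => hg x

open Complex in
theorem aux_fourier_sum {u : ℝ → ℝ} (hu : Continuous u) (hp : Function.Periodic u (2 * Real.pi))
    (hs : Summable (fourierCoef u)) (x : ℝ) :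
    HasSum (fun k : ℤ => fourierCoef u k * cexp (I * k * x)) (u x) := by
  have : Fact (0 < 2 * Real.pi) := ⟨Real.two_pi_pos⟩
  have hpc : Function.Periodic (fun x => (u x : ℂ)) (2 * Real.pi) := fun x => by
    simp only [hp x]
  let U : C(AddCircle (2 * Real.pi), ℂ) :=
    ⟨hpc.lift, continuous_coinduced_dom.mpr (by
      show Continuous (fun x => (u x : ℂ))
      fun_prop)⟩
  have hpi : (Real.pi : ℂ) ≠ 0 := by exact_mod_cast Real.pi_ne_zero
  have hU : ∀ x : ℝ, U (x : AddCircle (2 * Real.pi)) = u x := fun x => rfl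
  have hc : ∀ k, fourierCoeff U k = fourierCoef u k := by
    intro k
    rw [fourierCoeff_eq_intervalIntegral _ _ 0, fourierCoef, zero_add]
    rw [Complex.real_smul]
    congr 1
    apply intervalIntegral.integral_congr
    intro x _
    simp only [hU, fourier_coe_apply, smul_eq_mul]
    rw [mul_comm]
    congr 2
    push_cast
    field_simp
  have := has_pointwise_sum_fourier_series_of_summable (f := U) (by
    convert hs using 1; ext k; exact hc k) (x : AddCircle (2 * Real.pi))
  rw [hU] at this
  convert this using 2 with k
  rw [hc, fourier_coe_apply, smul_eq_mul]
  congr 2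
  push_cast
  field_simp

open Complex in
theorem aux_hasDeriv_exp (c : ℂ) (x : ℝ) :
    HasDerivAt (fun y : ℝ => cexp (c * y)) (c * cexp (c * x)) x := by
  have h1 : HasDerivAt (fun y : ℂ => cexp (c * y)) (cexp (c * x) * (c * 1)) (x : ℂ) :=
    ((hasDerivAt_id (x : ℂ)).const_mul c).cexp
  have h2 := h1.comp_ofReal
  convert h2 using 1
  ring

open Complex in
theorem aux_exp_two_pi (k : ℤ) : cexp (-I * k * (2 * Real.pi : ℝ)) = 1 := by
  rw [Complex.exp_eq_one_iff]
  exact ⟨-k, by push_cast; ring⟩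

open Complex in
theorem aux_coef_deriv {u : ℝ → ℝ} (hu : ContDiff ℝ 1 u)
    (hp : Function.Periodic u (2 * Real.pi)) (k : ℤ) :
    fourierCoef (deriv u) k = I * k * fourierCoef u k := by
  unfold fourierCoef
  have hd : ∀ x, HasDerivAt (fun x => (u x : ℂ)) ((deriv u x : ℝ) : ℂ) x := fun x =>
    ((hu.differentiable (by simp)) x).hasDerivAt.ofReal_comp
  have hcd : Continuous (deriv u) := hu.continuous_deriv (by simp)
  have := intervalIntegral.integral_mul_deriv_eq_deriv_mul (a := 0) (b := 2 * Real.pi)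
    (u := fun x : ℝ => cexp (-I * k * x)) (u' := fun x : ℝ => -I * k * cexp (-I * k * x))
    (v := fun x => (u x : ℂ)) (v' := fun x => ((deriv u x : ℝ) : ℂ))
    (fun x _ => aux_hasDeriv_exp _ x) (fun x _ => hd x)
    (Continuous.intervalIntegrable (by fun_prop) _ _)
    (Continuous.intervalIntegrable (by fun_prop) _ _)
  have hu0 : u (2 * Real.pi) = u 0 := by simpa using hp 0
  simp only [aux_exp_two_pi, hu0] at this
  have e1 : ∀ x : ℝ, ((deriv u x : ℝ) : ℂ) * cexp (-I * k * x)
      = cexp (-I * k * x) * ((deriv u x : ℝ) : ℂ) := fun x => mul_comm _ _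
  have e2 : ∀ x : ℝ, -I * k * cexp (-I * k * x) * (u x : ℂ)
      = (-I * k) * ((u x : ℂ) * cexp (-I * k * x)) := fun x => by ring
  simp_rw [e1, this, e2]
  rw [intervalIntegral.integral_const_mul]
  simp
  ring

open Complex in
theorem aux_coef_bdd {u : ℝ → ℝ} (hu : Continuous u) (hp : Function.Periodic u (2 * Real.pi)) :
    ∃ C, ∀ k, ‖fourierCoef u k‖ ≤ C := by
  obtain ⟨C, hC0, hC⟩ := aux_bdd hu hp
  refine ⟨‖((1 / (2 * Real.pi) : ℝ) : ℂ)‖ * (C * |2 * Real.pi - 0|), fun k => ?_⟩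
  unfold fourierCoef
  rw [norm_mul]
  gcongr
  apply intervalIntegral.norm_integral_le_of_norm_le_const
  intro x _
  have : -I * k * x = I * (-k : ℤ) * x := by push_cast; ring
  rw [norm_mul, this, aux_norm_exp, mul_one, Complex.norm_real]
  exact hC x

theorem aux_periodic_deriv {u : ℝ → ℝ} {T : ℝ} (hp : Function.Periodic u T) :
    Function.Periodic (deriv u) T := by
  intro x
  rw [← deriv_comp_add_const]
  congr 1
  ext y
  exact hp y

open Complex in
theorem aux_summable {f : ℝ → ℝ} (hf : ContDiff ℝ (⊤ : ℕ∞) f)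
    (hp : Function.Periodic f (2 * Real.pi)) :
    Summable fun k : ℤ => (1 + (k:ℝ) ^ 2) * ‖fourierCoef f k‖ := by
  have key : ∀ n : ℕ, ContDiff ℝ (⊤ : ℕ∞) (iteratedDeriv n f) ∧
      Function.Periodic (iteratedDeriv n f) (2 * Real.pi) ∧
      ∀ k, fourierCoef (iteratedDeriv n f) k = (I * k) ^ n * fourierCoef f k := by
    intro n
    induction n with
    | zero => simpa using ⟨hf, hp⟩
    | succ n ih =>
      obtain ⟨h1, h2, h3⟩ := ih
      rw [iteratedDeriv_succ]
      refine ⟨(contDiff_infty_iff_deriv.mp h1).2, aux_periodic_deriv h2, fun k => ?_⟩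
      rw [aux_coef_deriv (h1.of_le (by exact_mod_cast le_top)) h2, h3]
      ring
  obtain ⟨h1, h2, h3⟩ := key 4
  obtain ⟨C, hC⟩ := aux_coef_bdd h1.continuous h2
  have hb : ∀ k : ℤ, (k:ℝ) ^ 4 * ‖fourierCoef f k‖ ≤ C := by
    intro k
    have := hC k
    rw [h3, norm_mul, norm_pow, norm_mul, norm_I, one_mul, Complex.norm_intCast] at this
    rwa [Even.pow_abs (by decide)] at this
  have hs : Summable fun k : ℤ => (2 * C) * (1 / (k:ℝ) ^ 2) :=
    (Real.summable_one_div_int_pow.mpr (by norm_num)).mul_left _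
  refine Summable.of_norm_bounded_eventually hs ?_
  have : ∀ᶠ k : ℤ in Filter.cofinite, k ≠ 0 :=
    (Set.finite_singleton (0:ℤ)).eventually_cofinite_notMem
  filter_upwards [this] with k hk
  rw [Real.norm_of_nonneg (by positivity)]
  have hk1 : (1:ℝ) ≤ (k:ℝ) ^ 2 := by
    have : 1 ≤ k ^ 2 := by have := sq_pos_of_ne_zero hk; omega
    exact_mod_cast this
  rw [mul_one_div, le_div_iff₀ (by linarith)]
  have h0 := norm_nonneg (fourierCoef f k)
  have h4 := hb k
  have : (1 + (k:ℝ)^2) * (k:ℝ)^2 ≤ 2 * (k:ℝ)^4 := by nlinarith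
  nlinarith [mul_le_mul_of_nonneg_right this h0]

/-- Fejer-type kernel. -/
noncomputable def auxK (n : ℕ) (t : ℝ) : ℂ :=
  ∑ j ∈ Finset.range n, ∑ l ∈ Finset.range n, Complex.exp (Complex.I * ((j:ℤ) - (l:ℤ) : ℤ) * t)

open Complex in
theorem auxK_norm (n : ℕ) (t : ℝ) : ‖auxK n t‖ ≤ (n:ℝ) ^ 2 := by
  unfold auxK
  calc _ ≤ ∑ j ∈ Finset.range n, ∑ l ∈ Finset.range n, (1:ℝ) := by
        refine (norm_sum_le _ _).trans (Finset.sum_le_sum fun j _ => ?_)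
        refine (norm_sum_le _ _).trans (Finset.sum_le_sum fun l _ => ?_)
        rw [aux_norm_exp]
    _ = _ := by simp; ring

theorem auxK_cont (n : ℕ) : Continuous (auxK n) := by
  unfold auxK; fun_prop

open Complex in
theorem auxK_int (n : ℕ) : ∫ t in (0:ℝ)..(2 * Real.pi), auxK n t = 2 * Real.pi * n := by
  have h : ∀ k : ℤ, ∫ t in (0:ℝ)..(2 * Real.pi), cexp (I * k * t)
      = if k = 0 then (2 * Real.pi : ℂ) else 0 := by
    intro k
    split_ifs with hk
    · simp [hk]
    · rw [integral_exp_mul_complex (by simp [hk])]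
      have : I * k * (2 * Real.pi : ℝ) = -I * (-k : ℤ) * (2 * Real.pi : ℝ) := by push_cast; ring
      rw [this, aux_exp_two_pi]
      simp
  unfold auxK
  rw [intervalIntegral.integral_finsetSum
    (fun j _ => Continuous.intervalIntegrable (by fun_prop) _ _)]
  have : ∀ j ∈ Finset.range n, ∫ t in (0:ℝ)..(2 * Real.pi), ∑ l ∈ Finset.range n,
      cexp (I * ((j:ℤ) - (l:ℤ) : ℤ) * t) = 2 * Real.pi := by
    intro j hj
    rw [intervalIntegral.integral_finsetSum
      (fun j _ => Continuous.intervalIntegrable (by fun_prop) _ _)]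
    simp_rw [h, sub_eq_zero, Nat.cast_inj]
    simp only [Finset.sum_ite_eq, hj, if_true]
  rw [Finset.sum_congr rfl this]
  simp
  ring

open Complex in
theorem auxK_mul (n : ℕ) (t : ℝ) :
    (1 - Complex.cos t) * auxK n t = 1 - (cexp (I * n * t) + cexp (-(I * n * t))) / 2 := by
  have hK : auxK n t = (∑ j ∈ Finset.range n, cexp (I * t) ^ j) *
      (∑ j ∈ Finset.range n, cexp (-(I * t)) ^ j) := by
    unfold auxK
    rw [Finset.sum_mul_sum]
    refine Finset.sum_congr rfl fun j _ => Finset.sum_congr rfl fun l _ => ?_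
    rw [← Complex.exp_nat_mul, ← Complex.exp_nat_mul, ← Complex.exp_add]
    congr 1
    push_cast
    ring
  have hz := geom_sum_mul (cexp (I * t)) n
  have hw := geom_sum_mul (cexp (-(I * t))) n
  rw [← Complex.exp_nat_mul] at hz hw
  have e1 : (n : ℂ) * (I * t) = I * n * t := by ring
  have e2 : (n : ℂ) * (-(I * t)) = -(I * n * t) := by ring
  rw [e1] at hz
  rw [e2] at hw
  have hzw : cexp (I * t) * cexp (-(I * t)) = 1 := by rw [← Complex.exp_add]; simp
  have hzwn : cexp (I * n * t) * cexp (-(I * n * t)) = 1 := by rw [← Complex.exp_add]; simp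
  have hcos : 1 - Complex.cos t = (cexp (I * t) - 1) * (cexp (-(I * t)) - 1) / 2 := by
    rw [Complex.cos, mul_comm (t:ℂ) I, neg_mul, mul_comm (t:ℂ) I]
    linear_combination (-1/2) * hzw
  rw [hK, hcos]
  calc _ = ((∑ j ∈ Finset.range n, cexp (I * t) ^ j) * (cexp (I * t) - 1)) *
      ((∑ j ∈ Finset.range n, cexp (-(I * t)) ^ j) * (cexp (-(I * t)) - 1)) / 2 := by ring
    _ = _ := by rw [hz, hw]; linear_combination (1/2) * hzwn

theorem aux_phi_le {f : ℝ → ℝ} (hf : Continuous f) (hp : Function.Periodic f (2 * Real.pi))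
    (hf0 : ∀ x, 0 ≤ f x) (t : ℝ) :
    ∫ x in (0:ℝ)..(2 * Real.pi), f x ^ 2 * f (x + t) ≤ ∫ x in (0:ℝ)..(2 * Real.pi), f x ^ 3 := by
  have h1 : ∫ x in (0:ℝ)..(2 * Real.pi), f (x + t) ^ 3 = ∫ x in (0:ℝ)..(2 * Real.pi), f x ^ 3 := by
    have hp3 : Function.Periodic (fun x => f x ^ 3) (2 * Real.pi) := fun x => by simp only [hp x]
    rw [intervalIntegral.integral_comp_add_right (fun x => f x ^ 3) t]
    have := hp3.intervalIntegral_add_eq t 0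
    simpa [add_comm] using this
  calc _ ≤ ∫ x in (0:ℝ)..(2 * Real.pi), ((2 / 3) * f x ^ 3 + (1 / 3) * f (x + t) ^ 3) := by
        apply intervalIntegral.integral_mono_on Real.two_pi_pos.le
          (Continuous.intervalIntegrable (by fun_prop) _ _)
          (Continuous.intervalIntegrable (by fun_prop) _ _)
        intro x _
        have a := hf0 x
        have b := hf0 (x + t)
        nlinarith [mul_nonneg (add_nonneg (add_nonneg a a) b) (sq_nonneg (f x - f (x + t)))]
    _ = _ := by
        rw [intervalIntegral.integral_add (Continuous.intervalIntegrable (by fun_prop) _ _)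
          (Continuous.intervalIntegrable (by fun_prop) _ _), intervalIntegral.integral_const_mul,
          intervalIntegral.integral_const_mul, h1]
        ring

open Complex in
/-- For a nonnegative smooth `2π`-periodic `f` with Hilbert transform `h`
(assumed differentiable), `∫₀^{2π} f² h′ dx ≥ 0`;
this is the positivity `∫ θ² Λθ dx ≥ 0` since `Λf = (ℋf)′`. -/
theorem sq_mul_lambda_nonneg (f h : ℝ → ℝ)
    (hf : ContDiff ℝ (⊤ : ℕ∞) f) (hfp : Function.Periodic f (2 * Real.pi))
    (hf0 : ∀ x, 0 ≤ f x)
    (hh : IsHilbertTransformOf h f) (hhd : Differentiable ℝ h) :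
    0 ≤ ∫ x in (0:ℝ)..(2 * Real.pi), (f x) ^ 2 * deriv h x := by
  have hfc : Continuous f := hf.continuous
  obtain ⟨C, hC0, hC⟩ := aux_bdd hfc hfp
  have hS := aux_summable hf hfp
  have hS0 : Summable fun k : ℤ => ‖fourierCoef f k‖ :=
    Summable.of_nonneg_of_le (fun k => norm_nonneg _)
      (fun k => by nlinarith [norm_nonneg (fourierCoef f k), sq_nonneg (k:ℝ)]) hS
  have habs : ∀ k : ℤ, |(k:ℝ)| ≤ 1 + (k:ℝ) ^ 2 := fun k => by
    nlinarith [sq_nonneg (|(k:ℝ)| - 1), sq_abs (k:ℝ), abs_nonneg (k:ℝ)]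
  have hS1 : Summable fun k : ℤ => |(k:ℝ)| * ‖fourierCoef f k‖ :=
    Summable.of_nonneg_of_le (fun k => by positivity)
      (fun k => mul_le_mul_of_nonneg_right (habs k) (norm_nonneg _)) hS
  have hf2 : ∀ x, ‖((f x ^ 2 : ℝ) : ℂ)‖ ≤ C ^ 2 := fun x => by
    rw [Complex.norm_real, norm_pow]
    exact pow_le_pow_left₀ (norm_nonneg _) (hC x) 2
  -- the coefficients of `f²`
  set G : ℤ → ℂ := fun k => ∫ x in (0:ℝ)..(2 * Real.pi),
    ((f x ^ 2 : ℝ) : ℂ) * cexp (I * k * x) with hG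
  have hGb : ∀ k, ‖G k‖ ≤ C ^ 2 * |2 * Real.pi - 0| := fun k => by
    apply intervalIntegral.norm_integral_le_of_norm_le_const
    intro x _
    rw [norm_mul, aux_norm_exp, mul_one]
    exact hf2 x
  -- Fourier series of `f`
  have hfs : ∀ x : ℝ, HasSum (fun k : ℤ => fourierCoef f k * cexp (I * k * x)) (f x : ℂ) :=
    aux_fourier_sum hfc hfp hS0.of_norm
  -- derivative of `h`
  obtain ⟨hhc, hhp, hhk⟩ := hh
  have hhn : ∀ k, ‖fourierCoef h k‖ ≤ ‖fourierCoef f k‖ := fun k => by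
    rw [hhk, norm_mul, norm_mul, norm_neg, norm_I, one_mul]
    refine mul_le_of_le_one_left (norm_nonneg _) ?_
    rcases lt_trichotomy k 0 with h | h | h
    · simp [Int.sign_eq_neg_one_of_neg h]
    · simp [h]
    · simp [Int.sign_eq_one_of_pos h]
  have hhs : ∀ x : ℝ, HasSum (fun k : ℤ => fourierCoef h k * cexp (I * k * x)) (h x : ℂ) :=
    aux_fourier_sum hhc hhp (Summable.of_norm_bounded hS0 hhn)
  have hterm : ∀ (k : ℤ) (x : ℝ), HasDerivAt (fun y : ℝ => fourierCoef h k * cexp (I * k * y))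
      (((|(k:ℝ)| : ℝ) : ℂ) * fourierCoef f k * cexp (I * k * x)) x := by
    intro k x
    have h1 := (aux_hasDeriv_exp (I * k) x).const_mul (fourierCoef h k)
    convert! h1 using 1
    have hs : (((|(k:ℝ)| : ℝ) : ℂ)) = (Int.sign k : ℂ) * k := by
      have : |k| = Int.sign k * k := (Int.sign_mul_self_eq_abs k).symm
      rw [← Int.cast_abs, this]
      push_cast
      rfl
    rw [hhk, hs]
    linear_combination ((Int.sign k : ℂ) * k * fourierCoef f k * cexp (I * k * x)) * I_mul_I
  have htb : ∀ (k : ℤ) (x : ℝ), ‖((|(k:ℝ)| : ℝ) : ℂ) * fourierCoef f k * cexp (I * k * x)‖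
      ≤ |(k:ℝ)| * ‖fourierCoef f k‖ := fun k x => by
    rw [norm_mul, aux_norm_exp, norm_mul, Complex.norm_real, mul_one, Real.norm_eq_abs, abs_abs]
  have hder : ∀ x : ℝ, HasSum
      (fun k : ℤ => ((|(k:ℝ)| : ℝ) : ℂ) * fourierCoef f k * cexp (I * k * x))
      ((deriv h x : ℝ) : ℂ) := by
    intro x
    have h1 := hasDerivAt_tsum hS1 hterm htb (y₀ := 0) (hhs 0).summable x
    have h2 : (fun z : ℝ => ∑' k : ℤ, fourierCoef h k * cexp (I * k * z)) = fun z => (h z : ℂ) :=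
      funext fun z => (hhs z).tsum_eq
    rw [h2] at h1
    rw [(hhd x).hasDerivAt.ofReal_comp.unique h1]
    exact (Summable.of_norm_bounded hS1 fun k => htb k x).hasSum
  -- the integral as a sum
  have hmain : HasSum (fun k : ℤ => ((|(k:ℝ)| : ℝ) : ℂ) * (fourierCoef f k * G k))
      ((∫ x in (0:ℝ)..(2 * Real.pi), (f x) ^ 2 * deriv h x : ℝ) : ℂ) := by
    have := aux_sum_int (fun (k : ℤ) (x : ℝ) => ((f x ^ 2 : ℝ) : ℂ) *
      (((|(k:ℝ)| : ℝ) : ℂ) * fourierCoef f k * cexp (I * k * x))) (fun k => by fun_prop)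
      (fun k => C ^ 2 * (|(k:ℝ)| * ‖fourierCoef f k‖)) (hS1.mul_left _)
      (fun k x => by
        rw [norm_mul]
        exact mul_le_mul (hf2 x) (htb k x) (norm_nonneg _) (by positivity))
      (fun x => ((f x ^ 2 : ℝ) : ℂ) * ((deriv h x : ℝ) : ℂ)) (fun x => (hder x).mul_left _)
    rw [← intervalIntegral.integral_ofReal]
    convert! this using 1
    · ext k
      rw [hG, ← mul_assoc, ← intervalIntegral.integral_const_mul]
      congr 1
      ext x
      ring
    · congr 1
      ext x
      push_cast
      rfl
  -- the correlation function
  have hphi : ∀ t : ℝ, HasSum (fun k : ℤ => fourierCoef f k * G k * cexp (I * k * t))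
      ((∫ x in (0:ℝ)..(2 * Real.pi), (f x) ^ 2 * f (x + t) : ℝ) : ℂ) := by
    intro t
    have := aux_sum_int (fun (k : ℤ) (x : ℝ) => ((f x ^ 2 : ℝ) : ℂ) *
      (fourierCoef f k * cexp (I * k * (x + t : ℝ)))) (fun k => by fun_prop)
      (fun k => C ^ 2 * ‖fourierCoef f k‖) (hS0.mul_left _)
      (fun k x => by
        rw [norm_mul, norm_mul, aux_norm_exp, mul_one]
        exact mul_le_mul_of_nonneg_right (hf2 x) (norm_nonneg _))
      (fun x => ((f x ^ 2 : ℝ) : ℂ) * ((f (x + t) : ℝ) : ℂ)) (fun x => (hfs (x + t)).mul_left _)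
    rw [← intervalIntegral.integral_ofReal]
    convert! this using 1
    · ext k
      rw [hG, mul_right_comm, ← intervalIntegral.integral_const_mul]
      congr 1
      ext x
      have : I * k * (x + t : ℝ) = I * k * x + I * k * t := by push_cast; ring
      rw [this, Complex.exp_add]
      ring
    · congr 1
      ext x
      push_cast
      rfl
  have hphi0 : (∫ x in (0:ℝ)..(2 * Real.pi), (f x) ^ 2 * f (x + 0))
      = ∫ x in (0:ℝ)..(2 * Real.pi), f x ^ 3 := by
    congr 1
    ext x
    rw [add_zero]
    ring
  -- bounds for the kernel series
  have hKb : ∀ (k : ℤ) (t : ℝ), ‖fourierCoef f k * G k * auxK k.natAbs t‖ ≤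
      (C ^ 2 * |2 * Real.pi - 0|) * ((1 + (k:ℝ) ^ 2) * ‖fourierCoef f k‖) := by
    intro k t
    have hk : ‖auxK k.natAbs t‖ ≤ 1 + (k:ℝ) ^ 2 := by
      refine (auxK_norm _ _).trans ?_
      rw [Nat.cast_natAbs, Int.cast_abs, sq_abs]
      linarith
    rw [norm_mul, norm_mul]
    calc _ ≤ ‖fourierCoef f k‖ * (C ^ 2 * |2 * Real.pi - 0|) * (1 + (k:ℝ) ^ 2) := by
          gcongr
          exact hGb k
      _ = _ := by ring
  have hKs : ∀ t : ℝ, Summable fun k : ℤ => fourierCoef f k * G k * auxK k.natAbs t := fun t =>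
    Summable.of_norm_bounded (hS.mul_left _) fun k => hKb k t
  -- positivity of the kernel series
  have hpos : ∀ t : ℝ, t ∈ Set.Ioo 0 (2 * Real.pi) →
      0 ≤ (∑' k : ℤ, fourierCoef f k * G k * auxK k.natAbs t).re := by
    intro t ht
    have hs1 := (hKs t).hasSum.mul_left (1 - Complex.cos t)
    have hs2 := (hphi 0).sub (((hphi t).add (hphi (-t))).div_const 2)
    have heq : ∀ k : ℤ, (1 - Complex.cos t) * (fourierCoef f k * G k * auxK k.natAbs t) =
        fourierCoef f k * G k * cexp (I * k * (0:ℝ)) - (fourierCoef f k * G k * cexp (I * k * t) +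
          fourierCoef f k * G k * cexp (I * k * (-t : ℝ))) / 2 := by
      intro k
      have h1 := auxK_mul k.natAbs t
      have h2 : cexp (I * k.natAbs * t) + cexp (-(I * k.natAbs * t)) =
          cexp (I * k * t) + cexp (I * k * (-t : ℝ)) := by
        have e : I * k * (-t : ℝ) = -(I * k * t) := by push_cast; ring
        rw [e]
        rcases Int.natAbs_eq k with h | h
        · have : (k : ℂ) = (k.natAbs : ℂ) := by
            conv_lhs => rw [h]
            exact Int.cast_natCast _
          rw [this]
        · have : (k : ℂ) = -(k.natAbs : ℂ) := by
            conv_lhs => rw [h]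
            rw [Int.cast_neg, Int.cast_natCast]
          rw [this, add_comm]
          congr 2 <;> ring
      rw [h2] at h1
      have h3 : cexp (I * k * (0:ℝ)) = 1 := by simp
      rw [h3]
      linear_combination (fourierCoef f k * G k) * h1
    simp_rw [heq] at hs1
    have hu := hs1.unique hs2
    have hre := congrArg Complex.re hu
    rw [← Complex.ofReal_cos, ← Complex.ofReal_one, ← Complex.ofReal_sub, Complex.re_ofReal_mul,
      ← Complex.ofReal_add, ← Complex.ofReal_ofNat, ← Complex.ofReal_div, ← Complex.ofReal_sub,
      Complex.ofReal_re, hphi0] at hre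
    have hcos : 0 < 1 - Real.cos t := by
      have h1 := Real.cos_le_one t
      rcases h1.lt_or_eq with h | h
      · linarith
      · rw [Real.cos_eq_one_iff_of_lt_of_lt (by linarith [ht.1, Real.pi_pos]) ht.2] at h
        exact absurd h ht.1.ne'
    have p1 := aux_phi_le hfc hfp hf0 t
    have p2 := aux_phi_le hfc hfp hf0 (-t)
    refine nonneg_of_mul_nonneg_right ?_ hcos
    rw [hre]
    linarith
  -- conclusion
  have hfin := aux_sum_int (fun (k : ℤ) (t : ℝ) => (fourierCoef f k * G k * auxK k.natAbs t).re)
    (fun k => Complex.continuous_re.comp (continuous_const.mul (auxK_cont _)))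
    _ (hS.mul_left (C ^ 2 * |2 * Real.pi - 0|))
    (fun k t => (Complex.abs_re_le_norm _).trans (hKb k t))
    (fun t => (∑' k : ℤ, fourierCoef f k * G k * auxK k.natAbs t).re)
    (fun t => Complex.hasSum_re (hKs t).hasSum)
  have hint : ∀ k : ℤ, ∫ t in (0:ℝ)..(2 * Real.pi), (fourierCoef f k * G k * auxK k.natAbs t).re
      = 2 * Real.pi * (((|(k:ℝ)| : ℝ) : ℂ) * (fourierCoef f k * G k)).re := by
    intro k
    have hi : IntervalIntegrable (fun t => fourierCoef f k * G k * auxK k.natAbs t) volume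
        0 (2 * Real.pi) := (continuous_const.mul (auxK_cont _)).intervalIntegrable _ _
    have := Complex.reCLM.intervalIntegral_comp_comm hi
    simp only [Complex.reCLM_apply] at this
    rw [this, intervalIntegral.integral_const_mul, auxK_int]
    have e : fourierCoef f k * G k * (2 * Real.pi * (k.natAbs : ℂ)) =
        ((2 * Real.pi : ℝ) : ℂ) * (((|(k:ℝ)| : ℝ) : ℂ) * (fourierCoef f k * G k)) := by
      have : (k.natAbs : ℂ) = ((|(k:ℝ)| : ℝ) : ℂ) := by
        rw [← Int.cast_abs, Nat.cast_natAbs]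
        norm_cast
      rw [this]
      push_cast
      ring
    rw [e, Complex.re_ofReal_mul]
  simp_rw [hint] at hfin
  have hm2 := (Complex.hasSum_re hmain).mul_left (2 * Real.pi)
  rw [Complex.ofReal_re] at hm2
  have hE := hm2.unique hfin
  have hI : 0 ≤ ∫ t in (0:ℝ)..(2 * Real.pi),
      (∑' k : ℤ, fourierCoef f k * G k * auxK k.natAbs t).re := by
    rw [intervalIntegral.integral_of_le Real.two_pi_pos.le, integral_Ioc_eq_integral_Ioo]
    exact setIntegral_nonneg measurableSet_Ioo hpos
  rw [← hE] at hI
  exact nonneg_of_mul_nonneg_right hI Real.two_pi_pos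
end

section
/- Let δ ∈ [1/2, 1], and let θ : ℝ × ℝ → ℝ be a smooth (C^∞) function, 2π-periodic in the space variable, with θ(t,x) ≥ 0 for all (t,x). For each t let h(t,·) be the periodic Hilbert transform of θ(t,·) (ĥ(t,k) = −i·sgn(k)·θ̂(t,k) for all k ∈ ℤ, where û(k) = (1/2π)∫₀^{2π}u(x)e^{−ikx}dx), and assume h is smooth. Suppose ∂_t θ + (1−δ) h ∂_x θ + δ ∂_x(θ h) = 0. Then the function t ↦ ∫₀^{2π} θ(t,x)² dx is nonincreasing; indeed its derivative equals (1 − 2δ)∫₀^{2π} θ(t,x)² ∂_x h(t,x) dx ≤ 0. -/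
open MeasureTheory

open scoped ComplexConjugate

lemma fourierCoef_eq_fourierCoeff [Fact (0 < 2 * Real.pi)] (u : ℝ → ℝ)
    (U : AddCircle (2 * Real.pi) → ℂ) (hU : ∀ x : ℝ, U x = u x) (k : ℤ) :
    fourierCoeff U k = fourierCoef u k := by
  rw [fourierCoeff_eq_intervalIntegral _ _ 0, fourierCoef, zero_add, Complex.real_smul]
  congr 1
  apply intervalIntegral.integral_congr
  intro x _
  simp only [hU, smul_eq_mul]
  rw [fourier_coe_apply, mul_comm]
  congr 2
  have : (Real.pi : ℂ) ≠ 0 := by exact_mod_cast Real.pi_ne_zero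
  push_cast
  field_simp

lemma exists_lift (u : ℝ → ℝ) (hu : Continuous u) (hp : Function.Periodic u (2 * Real.pi)) :
    ∃ U : C(AddCircle (2 * Real.pi), ℂ), ∀ x : ℝ, U x = u x := by
  have hp' : Function.Periodic (fun x => (u x : ℂ)) (2 * Real.pi) := by
    intro x; simp [hp x]
  refine ⟨⟨hp'.lift, ?_⟩, fun x => ?_⟩
  · apply continuous_coinduced_dom.mpr
    exact Complex.continuous_ofReal.comp hu
  · simp [Function.Periodic.lift_coe]

lemma parseval (u v : ℝ → ℝ) (hu : Continuous u) (hv : Continuous v)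
    (pu : Function.Periodic u (2 * Real.pi)) (pv : Function.Periodic v (2 * Real.pi)) :
    HasSum (fun k : ℤ => conj (fourierCoef u k) * fourierCoef v k)
      (((1 / (2 * Real.pi)) * ∫ x in (0:ℝ)..(2 * Real.pi), u x * v x : ℝ) : ℂ) := by
  have : Fact (0 < 2 * Real.pi) := ⟨Real.two_pi_pos⟩
  obtain ⟨U, hU⟩ := exists_lift u hu pu
  obtain ⟨V, hV⟩ := exists_lift v hv pv
  have H := (fourierBasis (T := 2 * Real.pi)).hasSum_inner_mul_inner
    (ContinuousMap.toLp (E := ℂ) 2 AddCircle.haarAddCircle ℂ U)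
    (ContinuousMap.toLp (E := ℂ) 2 AddCircle.haarAddCircle ℂ V)
  have e1 : ∀ (W : C(AddCircle (2 * Real.pi), ℂ)) (w : ℝ → ℝ), (∀ x : ℝ, W x = w x) → ∀ k : ℤ,
      inner ℂ (fourierBasis (T := 2 * Real.pi) k)
        (ContinuousMap.toLp (E := ℂ) 2 AddCircle.haarAddCircle ℂ W) = fourierCoef w k := by
    intro W w hW k
    rw [← HilbertBasis.repr_apply_apply, fourierBasis_repr, fourierCoeff_toLp,
      fourierCoef_eq_fourierCoeff w W hW]
  have e2 : (fun k : ℤ => conj (fourierCoef u k) * fourierCoef v k) = fun k : ℤ =>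
      inner ℂ (ContinuousMap.toLp (E := ℂ) 2 AddCircle.haarAddCircle ℂ U)
        (fourierBasis (T := 2 * Real.pi) k) *
      inner ℂ (fourierBasis (T := 2 * Real.pi) k)
        (ContinuousMap.toLp (E := ℂ) 2 AddCircle.haarAddCircle ℂ V) := by
    funext k
    rw [← e1 V v hV, ← e1 U u hU, inner_conj_symm]
  rw [e2]
  have e3 : (((1 / (2 * Real.pi)) * ∫ x in (0:ℝ)..(2 * Real.pi), u x * v x : ℝ) : ℂ) =
      inner ℂ (ContinuousMap.toLp (E := ℂ) 2 AddCircle.haarAddCircle ℂ U)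
        (ContinuousMap.toLp (E := ℂ) 2 AddCircle.haarAddCircle ℂ V) := by
    rw [ContinuousMap.inner_toLp, AddCircle.integral_haarAddCircle,
      ← AddCircle.intervalIntegral_preimage _ 0, zero_add, Complex.real_smul, Complex.ofReal_mul]
    rw [← intervalIntegral.integral_ofReal, one_div]
    congr 1
    apply intervalIntegral.integral_congr
    intro x _
    simp [hU, hV, mul_comm]
  rw [e3]
  exact H

lemma fourierCoef_conj (u : ℝ → ℝ) (k : ℤ) :
    conj (fourierCoef u k) = (1 / (2 * Real.pi) : ℝ) *
    ∫ x in (0:ℝ)..(2 * Real.pi), (u x : ℂ) * Complex.exp (Complex.I * k * x) := by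
  rw [fourierCoef, map_mul, Complex.conj_ofReal, intervalIntegral.integral_of_le Real.two_pi_pos.le,
    intervalIntegral.integral_of_le Real.two_pi_pos.le, ← integral_conj]
  congr 2
  ext x
  simp only [map_mul, Complex.conj_ofReal, ← Complex.exp_conj, map_neg, Complex.conj_I,
    map_intCast, neg_neg]

lemma fourierCoef_deriv (u u' : ℝ → ℝ) (hd : ∀ x, HasDerivAt u (u' x) x) (hu' : Continuous u')
    (pu : Function.Periodic u (2 * Real.pi)) (k : ℤ) :
    fourierCoef u' k = Complex.I * k * fourierCoef u k := by
  have h1 : ∀ x : ℝ, HasDerivAt (fun x : ℝ => Complex.exp (-Complex.I * k * x))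
      (Complex.exp (-Complex.I * k * x) * (-Complex.I * k)) x := by
    intro x
    have : HasDerivAt (fun x : ℝ => -Complex.I * k * (x : ℂ)) (-Complex.I * k) x := by
      simpa using (Complex.ofRealCLM.hasDerivAt (x := x)).const_mul (-Complex.I * k)
    exact this.cexp
  have H := intervalIntegral.integral_mul_deriv_eq_deriv_mul (a := 0) (b := 2 * Real.pi)
    (u := fun x : ℝ => Complex.exp (-Complex.I * k * x)) (v := fun x => (u x : ℂ))
    (u' := fun x : ℝ => Complex.exp (-Complex.I * k * x) * (-Complex.I * k))
    (v' := fun x => (u' x : ℂ)) (fun x _ => h1 x) (fun x _ => (hd x).ofReal_comp)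
    (Continuous.intervalIntegrable (by fun_prop) _ _)
    (Continuous.intervalIntegrable (by fun_prop) _ _)
  have hp0 : u (2 * Real.pi) = u 0 := by simpa using pu 0
  have he : Complex.exp (-Complex.I * k * ((2 * Real.pi : ℝ) : ℂ)) = 1 := by
    rw [Complex.exp_eq_one_iff]
    exact ⟨-k, by push_cast; ring⟩
  rw [he, hp0] at H
  have e0 : Complex.exp (-Complex.I * k * ((0 : ℝ) : ℂ)) = 1 := by simp
  rw [e0, sub_self, zero_sub] at H
  unfold fourierCoef
  have e2 : (∫ x in (0:ℝ)..(2 * Real.pi), (u' x : ℂ) * Complex.exp (-Complex.I * k * x))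
      = ∫ x in (0:ℝ)..(2 * Real.pi), Complex.exp (-Complex.I * k * x) * (u' x : ℂ) := by
    simp_rw [mul_comm]
  have e3 : (∫ x in (0:ℝ)..(2 * Real.pi),
        Complex.exp (-Complex.I * k * x) * (-Complex.I * k) * (u x : ℂ))
      = (-Complex.I * k) *
        ∫ x in (0:ℝ)..(2 * Real.pi), (u x : ℂ) * Complex.exp (-Complex.I * k * x) := by
    rw [← intervalIntegral.integral_const_mul]
    congr 1; ext x; ring
  rw [e2, H, e3]
  ring

lemma fourierCoef_one (k : ℤ) : fourierCoef (fun _ => 1) k = if k = 0 then 1 else 0 := by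
  split_ifs with hk
  · subst hk
    have : (Real.pi : ℂ) ≠ 0 := by exact_mod_cast Real.pi_ne_zero
    simp [fourierCoef]
    field_simp
  · have := fourierCoef_deriv (fun _ => 1) (fun _ => 0) (fun x => hasDerivAt_const _ _)
      continuous_const (fun _ => rfl) k
    have h0 : fourierCoef (fun _ => 0) k = 0 := by simp [fourierCoef]
    rw [h0] at this
    have hk' : (k : ℂ) ≠ 0 := by exact_mod_cast hk
    have := this.symm
    simpa [hk'] using this

lemma fourierCoef_zero (u : ℝ → ℝ) :
    fourierCoef u 0 = (((1 / (2 * Real.pi)) * ∫ x in (0:ℝ)..(2 * Real.pi), u x : ℝ) : ℂ) := by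
  unfold fourierCoef
  push_cast
  rw [← intervalIntegral.integral_ofReal]
  simp

noncomputable def fejK (N : ℕ) (x y : ℝ) : ℝ :=
  Complex.normSq (∑ j ∈ Finset.range N, Complex.exp (Complex.I * j * (x - y)))

lemma fejK_eq (N : ℕ) (x y : ℝ) : (fejK N x y : ℂ) =
    ∑ p ∈ Finset.range N ×ˢ Finset.range N,
      Complex.exp (Complex.I * (((p.1 : ℤ) - p.2 : ℤ) : ℂ) * x) *
      Complex.exp (-Complex.I * (((p.1 : ℤ) - p.2 : ℤ) : ℂ) * y) := by
  rw [fejK, ← Complex.mul_conj, map_sum, Finset.sum_mul_sum, ← Finset.sum_product']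
  apply Finset.sum_congr rfl
  intro p _
  rw [← Complex.exp_conj, ← Complex.exp_add, ← Complex.exp_add]
  congr 1
  simp
  ring

lemma fejK_cont (N : ℕ) : Continuous (fun p : ℝ × ℝ => fejK N p.1 p.2) := by
  unfold fejK
  exact Complex.continuous_normSq.comp (by fun_prop)

lemma fej_integral (N : ℕ) (u v : ℝ → ℝ) (hu : Continuous u) (hv : Continuous v) :
    (((1 / (2 * Real.pi)) ^ 2 * ∫ x in (0:ℝ)..(2 * Real.pi), ∫ y in (0:ℝ)..(2 * Real.pi),
      u x * v y * fejK N x y : ℝ) : ℂ) =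
    ∑ p ∈ Finset.range N ×ˢ Finset.range N,
      conj (fourierCoef u ((p.1 : ℤ) - p.2)) * fourierCoef v ((p.1 : ℤ) - p.2) := by
  rw [Complex.ofReal_mul, ← intervalIntegral.integral_ofReal]
  simp_rw [← intervalIntegral.integral_ofReal, Complex.ofReal_mul, fejK_eq, fourierCoef_conj,
    Finset.mul_sum]
  have e1 : ∀ x : ℝ, (∫ y in (0:ℝ)..(2 * Real.pi), ∑ p ∈ Finset.range N ×ˢ Finset.range N,
      (u x : ℂ) * v y * (Complex.exp (Complex.I * (((p.1 : ℤ) - p.2 : ℤ) : ℂ) * x) *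
      Complex.exp (-Complex.I * (((p.1 : ℤ) - p.2 : ℤ) : ℂ) * y))) =
      ∑ p ∈ Finset.range N ×ˢ Finset.range N,
       ((u x : ℂ) * Complex.exp (Complex.I * (((p.1 : ℤ) - p.2 : ℤ) : ℂ) * x)) *
        ∫ y in (0:ℝ)..(2 * Real.pi), 
        (v y : ℂ) * Complex.exp (-Complex.I * (((p.1 : ℤ) - p.2 : ℤ) : ℂ) * y) := by
    intro x
    rw [intervalIntegral.integral_finsetSum
      (fun p _ => Continuous.intervalIntegrable (by fun_prop) _ _)]
    apply Finset.sum_congr rfl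
    intro p _
    rw [← intervalIntegral.integral_const_mul]
    congr 1; ext y; ring
  simp_rw [e1]
  rw [intervalIntegral.integral_finsetSum
      (fun p _ => Continuous.intervalIntegrable (by fun_prop) _ _), Finset.mul_sum]
  apply Finset.sum_congr rfl
  intro p _
  rw [intervalIntegral.integral_mul_const, fourierCoef]
  push_cast
  ring

lemma fej_ineq (N : ℕ) (u : ℝ → ℝ) (hu : Continuous u) (h0 : ∀ x, 0 ≤ u x) :
    (∑ p ∈ Finset.range N ×ˢ Finset.range N,
      conj (fourierCoef (fun x => u x ^ 2) ((p.1 : ℤ) - p.2)) *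
        fourierCoef u ((p.1 : ℤ) - p.2)).re ≤
      N * ((1 / (2 * Real.pi)) * ∫ x in (0:ℝ)..(2 * Real.pi), u x ^ 2 * u x) := by
  have hu2 : Continuous (fun x => u x ^ 2) := by fun_prop
  have hu3 : Continuous (fun x => u x ^ 2 * u x) := by fun_prop
  have hK := fejK_cont N
  have A1 := fej_integral N _ _ hu2 hu
  have A2 := fej_integral N _ _ hu hu2
  have A3 := fej_integral N _ (fun _ => 1) hu3 continuous_const
  have A4 := fej_integral N (fun _ => 1) _ continuous_const hu3
  have diag : ∀ c : ℂ, ∑ p ∈ Finset.range N ×ˢ Finset.range N,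
      (if (p.1 : ℤ) - p.2 = 0 then c else 0) = N * c := by
    intro c
    rw [Finset.sum_product]
    have : ∀ i ∈ Finset.range N, ∑ j ∈ Finset.range N,
        (if (i : ℤ) - j = 0 then c else 0) = c := by
      intro i hi
      rw [Finset.sum_eq_single i]
      · simp
      · intro j _ hj
        rw [if_neg]; omega
      · intro h; exact absurd hi h
    rw [Finset.sum_congr rfl this]
    simp
  set S := (1 / (2 * Real.pi)) * ∫ x in (0:ℝ)..(2 * Real.pi), u x ^ 2 * u x with hS
  have B3 : ∑ p ∈ Finset.range N ×ˢ Finset.range N,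
      conj (fourierCoef (fun x => u x ^ 2 * u x) ((p.1 : ℤ) - p.2)) *
        fourierCoef (fun _ => 1) ((p.1 : ℤ) - p.2) = N * (S : ℂ) := by
    rw [← diag]
    apply Finset.sum_congr rfl
    intro p _
    rw [fourierCoef_one]
    split_ifs with h
    · rw [h, fourierCoef_zero, Complex.conj_ofReal, mul_one]
    · simp
  have B4 : ∑ p ∈ Finset.range N ×ˢ Finset.range N,
      conj (fourierCoef (fun _ => 1) ((p.1 : ℤ) - p.2)) *
        fourierCoef (fun x => u x ^ 2 * u x) ((p.1 : ℤ) - p.2) = N * (S : ℂ) := by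
    rw [← diag]
    apply Finset.sum_congr rfl
    intro p _
    rw [fourierCoef_one]
    split_ifs with h
    · rw [h, fourierCoef_zero, map_one, one_mul]
    · simp
  rw [B3] at A3
  rw [B4] at A4
  have A2' := congrArg conj A2
  rw [Complex.conj_ofReal, map_sum] at A2'
  simp only [map_mul, Complex.conj_conj] at A2'
  simp only [mul_comm (fourierCoef u _)] at A2'
  have A3' := Complex.ofReal_inj.1 (A3.trans (show (N : ℂ) * (S : ℂ) = ((N * S : ℝ) : ℂ) by push_cast; rfl))
  have A4' := Complex.ofReal_inj.1 (A4.trans (show (N : ℂ) * (S : ℂ) = ((N * S : ℝ) : ℂ) by push_cast; rfl))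
  rw [← A1] at A2' ⊢
  rw [Complex.ofReal_re]
  rw [Complex.ofReal_inj] at A2'
  set c := (1 / (2 * Real.pi)) ^ 2 with hc
  have hcpos : 0 ≤ c := by positivity
  have ii : ∀ F : ℝ × ℝ → ℝ, Continuous F → ∀ x, IntervalIntegrable (fun y => F (x, y)) volume
      0 (2 * Real.pi) := fun F hF x => Continuous.intervalIntegrable (by fun_prop) _ _
  have io : ∀ F : ℝ × ℝ → ℝ, Continuous F → IntervalIntegrable
      (fun x => ∫ y in (0:ℝ)..(2 * Real.pi), F (x, y)) volume 0 (2 * Real.pi) := by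
    intro F hF
    apply Continuous.intervalIntegrable
    exact intervalIntegral.continuous_parametric_intervalIntegral_of_continuous' (by exact hF) _ _
  have hadd : ∀ F G : ℝ × ℝ → ℝ, Continuous F → Continuous G →
      (∫ x in (0:ℝ)..(2 * Real.pi), ∫ y in (0:ℝ)..(2 * Real.pi), F (x, y) + G (x, y)) =
      (∫ x in (0:ℝ)..(2 * Real.pi), ∫ y in (0:ℝ)..(2 * Real.pi), F (x, y)) +
      (∫ x in (0:ℝ)..(2 * Real.pi), ∫ y in (0:ℝ)..(2 * Real.pi), G (x, y)) := by
    intro F G hF hG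
    rw [← intervalIntegral.integral_add (io F hF) (io G hG)]
    congr 1; ext x
    rw [← intervalIntegral.integral_add (ii F hF x) (ii G hG x)]
  have c1 : Continuous (fun p : ℝ × ℝ => u p.1 ^ 2 * u p.2 * fejK N p.1 p.2) := by fun_prop
  have c2 : Continuous (fun p : ℝ × ℝ => u p.1 * u p.2 ^ 2 * fejK N p.1 p.2) := by fun_prop
  have c3 : Continuous (fun p : ℝ × ℝ => u p.1 ^ 2 * u p.1 * 1 * fejK N p.1 p.2) := by fun_prop
  have c4 : Continuous (fun p : ℝ × ℝ => 1 * (u p.2 ^ 2 * u p.2) * fejK N p.1 p.2) := by fun_prop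
  have E1 := hadd _ _ c1 c2
  have E2 := hadd _ _ c3 c4
  have L : (∫ x in (0:ℝ)..(2 * Real.pi), ∫ y in (0:ℝ)..(2 * Real.pi),
      (u x ^ 2 * u y * fejK N x y + u x * u y ^ 2 * fejK N x y)) ≤
      ∫ x in (0:ℝ)..(2 * Real.pi), ∫ y in (0:ℝ)..(2 * Real.pi),
      (u x ^ 2 * u x * 1 * fejK N x y + 1 * (u y ^ 2 * u y) * fejK N x y) := by
    apply intervalIntegral.integral_mono_on Real.two_pi_pos.le (io _ (c1.add c2))
      (io _ (c3.add c4))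
    intro x _
    apply intervalIntegral.integral_mono_on Real.two_pi_pos.le (ii _ (c1.add c2) x)
      (ii _ (c3.add c4) x)
    intro y _
    have k0 : 0 ≤ fejK N x y := Complex.normSq_nonneg _
    have : 0 ≤ ((u x + u y) * (u x - u y) ^ 2) * fejK N x y :=
      mul_nonneg (mul_nonneg (add_nonneg (h0 x) (h0 y)) (sq_nonneg _)) k0
    simp only [Pi.add_apply]
    linarith
  simp only at E1 E2
  rw [E1, E2] at L
  have := mul_le_mul_of_nonneg_left L hcpos
  rw [mul_add, mul_add, A3', A4', A2'] at this
  linarith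

lemma sum_pairs (a : ℤ → ℂ) (N : ℕ) :
    ∑ p ∈ Finset.range N ×ˢ Finset.range N, a ((p.1 : ℤ) - p.2) =
      ∑ n ∈ Finset.range N, ∑ k ∈ Finset.Icc (-(n : ℤ)) n, a k := by
  induction N with
  | zero => simp
  | succ N ih =>
    rw [Finset.sum_range_succ, ← ih, Finset.sum_product, Finset.sum_product,
      Finset.sum_range_succ]
    have e : ∀ i : ℕ, ∑ j ∈ Finset.range (N + 1), a ((i : ℤ) - j)
      = ∑ j ∈ Finset.range N, a ((i : ℤ) - j) + a ((i : ℤ) - N) :=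
        fun i => Finset.sum_range_succ _ _
    simp only [Finset.sum_congr rfl (fun i _ => e i), Finset.sum_add_distrib]
    rw [add_assoc]
    congr 1
    have hd : Finset.Icc (-(N : ℤ)) N = (Finset.range N).image (fun i : ℕ => (i : ℤ) - N) ∪
        (Finset.range (N + 1)).image (fun j : ℕ => (N : ℤ) - j) := by
      ext k
      simp only [Finset.mem_Icc, Finset.mem_union, Finset.mem_image, Finset.mem_range]
      constructor
      · intro h
        by_cases hk : k < 0
        · left; exact ⟨(k + N).toNat, by omega, by omega⟩
        · right; exact ⟨(N - k).toNat, by omega, by omega⟩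
      · rintro (⟨i, h1, h2⟩ | ⟨i, h1, h2⟩) <;> omega
    rw [hd, Finset.sum_union, Finset.sum_image, Finset.sum_image]
    · intro i _ j _ h; simpa using h
    · intro i _ j _ h; simpa using h
    · rw [Finset.disjoint_left]
      intro k
      simp only [Finset.mem_image, Finset.mem_range]
      rintro ⟨i, h1, h2⟩ ⟨j, h3, h4⟩
      omega

lemma sum_ite_min (k : ℤ) (z : ℂ) (N : ℕ) :
    ∑ n ∈ Finset.range N, (z - if k ∈ Finset.Icc (-(n : ℤ)) n then z else 0) =
      ((min k.natAbs N : ℕ) : ℂ) * z := by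
  induction N with
  | zero => simp
  | succ N ih =>
    rw [Finset.sum_range_succ, ih]
    split_ifs with h
    · rw [Finset.mem_Icc] at h
      rw [min_eq_left (by omega), min_eq_left (by omega)]; ring
    · rw [Finset.mem_Icc] at h
      rw [min_eq_right (by omega), min_eq_right (by omega)]; push_cast; ring

lemma pos_integral (u g : ℝ → ℝ) (hu : Continuous u) (hg : Continuous g)
    (pu : Function.Periodic u (2 * Real.pi)) (pg : Function.Periodic g (2 * Real.pi))
    (h0 : ∀ x, 0 ≤ u x)
    (hc : ∀ k : ℤ, fourierCoef g k = (k.natAbs : ℂ) * fourierCoef u k) :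
    0 ≤ ∫ x in (0:ℝ)..(2 * Real.pi), u x ^ 2 * g x := by
  have hu2 : Continuous (fun x => u x ^ 2) := by fun_prop
  have pu2 : Function.Periodic (fun x => u x ^ 2) (2 * Real.pi) := fun x => by simp [pu x]
  have P1 := parseval _ _ hu2 hu pu2 pu
  have P2 := parseval _ _ hu2 hg pu2 pg
  set a : ℤ → ℂ := fun k => conj (fourierCoef (fun x => u x ^ 2) k) * fourierCoef u k with ha
  have e : (fun k : ℤ => conj (fourierCoef (fun x => u x ^ 2) k) * fourierCoef g k) =
      fun k : ℤ => (k.natAbs : ℂ) * a k := by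
    funext k; rw [hc]; simp only [ha]; ring
  rw [e] at P2
  set S := (1 / (2 * Real.pi)) * ∫ x in (0:ℝ)..(2 * Real.pi), u x ^ 2 * u x with hS
  have key : ∀ N : ℕ, HasSum (fun k : ℤ => ((min k.natAbs N : ℕ) : ℂ) * a k)
      (N * (S : ℂ) - ∑ n ∈ Finset.range N, ∑ k ∈ Finset.Icc (-(n : ℤ)) n, a k) := by
    intro N
    have h1 : ∀ n ∈ Finset.range N, HasSum
        (fun k : ℤ => a k - if k ∈ Finset.Icc (-(n : ℤ)) n then a k else 0)
        ((S : ℂ) - ∑ k ∈ Finset.Icc (-(n : ℤ)) n, a k) := by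
      intro n _
      apply P1.sub
      have : ∑ k ∈ Finset.Icc (-(n : ℤ)) n, a k = ∑ k ∈ Finset.Icc (-(n : ℤ)) n,
          if k ∈ Finset.Icc (-(n : ℤ)) n then a k else 0 :=
        Finset.sum_congr rfl (fun k hk => (if_pos hk).symm)
      rw [this]
      exact hasSum_sum_of_ne_finset_zero (fun k hk => if_neg hk)
    have h2 := hasSum_sum h1
    simp only [sum_ite_min] at h2
    simpa using h2
  have hre : ∀ N : ℕ, 0 ≤ (∑' k : ℤ, ((min k.natAbs N : ℕ) : ℂ) * a k).re := by
    intro N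
    rw [(key N).tsum_eq, ← sum_pairs]
    have := fej_ineq N u hu h0
    rw [Complex.sub_re]
    have e3 : ((N : ℂ) * (S : ℂ)).re = N * S := by simp
    rw [e3]
    linarith
  have T : Filter.Tendsto (fun N : ℕ => ∑' k : ℤ, ((min k.natAbs N : ℕ) : ℂ) * a k) Filter.atTop
      (nhds (∑' k : ℤ, (k.natAbs : ℂ) * a k)) := by
    apply tendsto_tsum_of_dominated_convergence P2.summable.norm
    · intro k
      apply tendsto_const_nhds.congr'
      filter_upwards [Filter.eventually_ge_atTop k.natAbs] with N hN
      rw [min_eq_left hN]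
    · refine Filter.Eventually.of_forall (fun N k => ?_)
      rw [norm_mul _ (a k), norm_mul _ (a k)]
      apply mul_le_mul_of_nonneg_right _ (norm_nonneg _)
      rw [Complex.norm_natCast, Complex.norm_natCast]
      exact_mod_cast min_le_left _ _
  rw [P2.tsum_eq] at T
  have T2 := (Complex.continuous_re.tendsto _).comp T
  have T3 := ge_of_tendsto' T2 hre
  rw [Complex.ofReal_re] at T3
  have : 0 < 1 / (2 * Real.pi) := by positivity
  exact nonneg_of_mul_nonneg_right T3 this

lemma l2_hasDerivAt (θ : ℝ × ℝ → ℝ) (hθ : ContDiff ℝ (⊤ : ℕ∞) θ) (t : ℝ) :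
    HasDerivAt (fun s => ∫ x in (0:ℝ)..(2 * Real.pi), (θ (s, x)) ^ 2)
      (∫ x in (0:ℝ)..(2 * Real.pi), 2 * θ (t, x) * deriv (fun s => θ (s, x)) t) t := by
  have hd : ∀ s x, HasDerivAt (fun s => θ (s, x)) (fderiv ℝ θ (s, x) (1, 0)) s := by
    intro s x
    have h1 := (hθ.differentiable (by simp)).differentiableAt (x := (s, x)) |>.hasFDerivAt
    have h2 : HasDerivAt (fun s : ℝ => (s, x)) ((1 : ℝ), (0 : ℝ)) s :=
      (hasDerivAt_id s).prodMk (hasDerivAt_const s x)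
    exact h1.comp_hasDerivAt s h2
  have hc : Continuous (fun p : ℝ × ℝ => fderiv ℝ θ p (1, 0)) :=
    (hθ.continuous_fderiv (by simp)).clm_apply continuous_const
  have hθc := hθ.continuous
  have hF : Continuous (fun p : ℝ × ℝ => 2 * θ p * fderiv ℝ θ p (1, 0)) := by fun_prop
  obtain ⟨C, hC⟩ := ((isCompact_closedBall t 1).prod
    (isCompact_Icc (a := (0:ℝ)) (b := 2 * Real.pi))).exists_bound_of_continuousOn hF.continuousOn
  have H := intervalIntegral.hasDerivAt_integral_of_dominated_loc_of_deriv_le (μ := volume)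
    (a := 0) (b := 2 * Real.pi) (F := fun s x => θ (s, x) ^ 2)
    (F' := fun s x => 2 * θ (s, x) * fderiv ℝ θ (s, x) (1, 0)) (x₀ := t) (bound := fun _ => C)
    (Metric.closedBall_mem_nhds t one_pos)
    (Filter.Eventually.of_forall fun s =>
      (show Continuous fun x => θ (s, x) ^ 2 by fun_prop).aestronglyMeasurable)
    (Continuous.intervalIntegrable (by fun_prop) _ _)
    (show Continuous fun x => 2 * θ (t, x) * fderiv ℝ θ (t, x) (1, 0) from
      hF.comp (by fun_prop : Continuous fun x : ℝ => (t, x))).aestronglyMeasurable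
    (Filter.Eventually.of_forall fun x hx s hs => by
      apply hC (s, x)
      rw [Set.uIoc_of_le Real.two_pi_pos.le] at hx
      exact ⟨hs, hx.1.le, hx.2⟩)
    (Continuous.intervalIntegrable (by fun_prop) _ _)
    (Filter.Eventually.of_forall fun x hx s hs => by
      simpa using (hd s x).fun_pow 2)
  have e : ∀ x, deriv (fun s => θ (s, x)) t = fderiv ℝ θ (t, x) (1, 0) := fun x => (hd t x).deriv
  simp_rw [e]
  exact H.2

/-- L² a priori estimate for `θ_t + (1−δ) ℋθ·θ_x + δ (θ ℋθ)_x = 0` with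
`δ ∈ [1/2,1]` and `θ ≥ 0`: the L² norm squared is nonincreasing, and its derivative
equals `(1−2δ) ∫ θ² (ℋθ)_x dx ≤ 0`. -/
theorem L2_estimate_1d_model (δ : ℝ) (hδ : δ ∈ Set.Icc (1/2 : ℝ) 1)
    (θ h : ℝ × ℝ → ℝ)
    (hθ : ContDiff ℝ (⊤ : ℕ∞) θ) (hh : ContDiff ℝ (⊤ : ℕ∞) h)
    (hθper : ∀ t x : ℝ, θ (t, x + 2 * Real.pi) = θ (t, x))
    (hθnonneg : ∀ p : ℝ × ℝ, 0 ≤ θ p)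
    (hhilb : ∀ t : ℝ, IsHilbertTransformOf (fun x => h (t, x)) (fun x => θ (t, x)))
    (hpde : ∀ t x : ℝ,
      deriv (fun s => θ (s, x)) t
        + (1 - δ) * h (t, x) * deriv (fun y => θ (t, y)) x
        + δ * deriv (fun y => θ (t, y) * h (t, y)) x = 0) :
    Antitone (fun t => ∫ x in (0:ℝ)..(2 * Real.pi), (θ (t, x)) ^ 2) ∧
    ∀ t : ℝ,
      HasDerivAt (fun s => ∫ x in (0:ℝ)..(2 * Real.pi), (θ (s, x)) ^ 2)
        ((1 - 2 * δ) * ∫ x in (0:ℝ)..(2 * Real.pi),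
          (θ (t, x)) ^ 2 * deriv (fun y => h (t, y)) x) t ∧
      (1 - 2 * δ) * (∫ x in (0:ℝ)..(2 * Real.pi),
          (θ (t, x)) ^ 2 * deriv (fun y => h (t, y)) x) ≤ 0 := by
  obtain ⟨hδ1, hδ2⟩ := hδ
  have sl : ∀ t : ℝ, ContDiff ℝ (⊤ : ℕ∞) (fun x : ℝ => (t, x)) := fun t => by fun_prop
  have main : ∀ t : ℝ,
      HasDerivAt (fun s => ∫ x in (0:ℝ)..(2 * Real.pi), (θ (s, x)) ^ 2)
        ((1 - 2 * δ) * ∫ x in (0:ℝ)..(2 * Real.pi),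
          (θ (t, x)) ^ 2 * deriv (fun y => h (t, y)) x) t ∧
      (1 - 2 * δ) * (∫ x in (0:ℝ)..(2 * Real.pi),
          (θ (t, x)) ^ 2 * deriv (fun y => h (t, y)) x) ≤ 0 := by
    intro t
    have hθt : ContDiff ℝ (⊤ : ℕ∞) (fun x => θ (t, x)) := hθ.comp (sl t)
    have hht : ContDiff ℝ (⊤ : ℕ∞) (fun x => h (t, x)) := hh.comp (sl t)
    obtain ⟨_, hhp, hco⟩ := hhilb t
    set u := fun x => θ (t, x) with hu
    set v := fun x => h (t, x) with hv
    have du : ∀ x, HasDerivAt u (deriv u x) x := fun x =>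
      ((hθt.differentiable (by simp)) x).hasDerivAt
    have dv : ∀ x, HasDerivAt v (deriv v x) x := fun x =>
      ((hht.differentiable (by simp)) x).hasDerivAt
    have cu' : Continuous (deriv u) := hθt.continuous_deriv (by simp)
    have cv' : Continuous (deriv v) := hht.continuous_deriv (by simp)
    have cu : Continuous u := hθt.continuous
    have cv : Continuous v := hht.continuous
    have pu : Function.Periodic u (2 * Real.pi) := fun x => hθper t x
    have pv' : Function.Periodic (deriv v) (2 * Real.pi) := by
      intro x
      have e : (fun y => v (y + 2 * Real.pi)) = v := funext hhp
      rw [← deriv_comp_add_const, e]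
    constructor
    · have D := l2_hasDerivAt θ hθ t
      convert D using 1
      have pt : ∀ x, 2 * θ (t, x) * deriv (fun s => θ (s, x)) t =
          (1 - 2 * δ) * (u x ^ 2 * deriv v x) -
            (deriv v x * u x ^ 2 + v x * (2 * u x * deriv u x)) := by
        intro x
        have := hpde t x
        have e : deriv (fun y => θ (t, y) * h (t, y)) x = deriv u x * v x + u x * deriv v x :=
          ((du x).mul (dv x)).deriv
        rw [e] at this
        have e2 : deriv (fun s => θ (s, x)) t = -((1 - δ) * v x * deriv u x
          + δ * (deriv u x * v x + u x * deriv v x)) := by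
          linarith
        rw [e2]
        show 2 * u x * _ = _
        ring
      simp_rw [pt]
      rw [intervalIntegral.integral_sub (Continuous.intervalIntegrable (by fun_prop) _ _)
        (Continuous.intervalIntegrable (by fun_prop) _ _), intervalIntegral.integral_const_mul]
      have z : (∫ x in (0:ℝ)..(2 * Real.pi),
          (deriv v x * u x ^ 2 + v x * (2 * u x * deriv u x))) = 0 := by
        rw [intervalIntegral.integral_eq_sub_of_hasDerivAt (f := fun x => v x * u x ^ 2)]
        · have p1 : u (2 * Real.pi) = u 0 := by simpa using pu 0
          have p2 : v (2 * Real.pi) = v 0 := by simpa using hhp 0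
          simp only [p1, p2, sub_self]
        · intro x _
          simpa using (dv x).fun_mul ((du x).fun_pow 2)
        · exact Continuous.intervalIntegrable (by fun_prop) _ _
      rw [z, sub_zero]
    · apply mul_nonpos_of_nonpos_of_nonneg (by linarith)
      apply pos_integral u (deriv v) cu cv' pu pv' (fun x => hθnonneg _)
      intro k
      rw [fourierCoef_deriv v (deriv v) dv cv' hhp k, hco k]
      have s : ((k : ℂ)) * (Int.sign k : ℂ) = (k.natAbs : ℂ) := by
        have := Int.mul_sign_self k
        rw [← Int.cast_mul, this]
        simp
      rw [← s]
      linear_combination (-(k : ℂ) * (Int.sign k : ℂ) * fourierCoef u k) * Complex.I_mul_I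
  refine ⟨antitone_of_deriv_nonpos (fun t => (main t).1.differentiableAt) (fun t => ?_), main⟩
  rw [(main t).1.deriv]
  exact (main t).2
end

section
/- Let δ ∈ [1/2, 1] and m₀ > 0, and let θ : ℝ × ℝ → ℝ be a smooth (C^∞) function, 2π-periodic in the space variable, with θ(t,x) ≥ m₀ for all (t,x). For each t let h(t,·) be the periodic Hilbert transform of θ(t,·) (ĥ(t,k) = −i·sgn(k)·θ̂(t,k) for all k ∈ ℤ, where û(k) = (1/2π)∫₀^{2π}u(x)e^{−ikx}dx), and assume h is smooth. Suppose ∂_t θ + (1−δ) h ∂_x θ + δ ∂_x(θ h) = 0. Then the function F(t) = 2π ∑_{k∈ℤ} |k| |θ̂(t,k)|² is differentiable and satisfies F′(t) ≤ −m₀ ∫₀^{2π} (∂_x θ(t,x))² dx for every t. -/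
open MeasureTheory

/-- Complex version of the Fourier coefficient. -/
noncomputable def cF (f : ℝ → ℂ) (k : ℤ) : ℂ :=
  (1 / (2 * Real.pi) : ℝ) *
    ∫ x in (0:ℝ)..(2 * Real.pi), f x * Complex.exp (-Complex.I * k * x)

lemma fourierCoef_eq_cF (u : ℝ → ℝ) (k : ℤ) : fourierCoef u k = cF (fun x => (u x : ℂ)) k := rfl

lemma two_pi_pos' : (0:ℝ) < 2 * Real.pi := by positivity

lemma cF_eq_On (f : ℝ → ℂ) (k : ℤ) : cF f k = fourierCoeffOn two_pi_pos' f k := by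
  rw [fourierCoeffOn_eq_integral]
  unfold cF
  rw [Complex.real_smul]
  simp only [sub_zero]
  congr 1
  apply intervalIntegral.integral_congr
  intro x _
  simp only [smul_eq_mul]
  rw [mul_comm]
  congr 1
  rw [fourier_coe_apply]
  congr 1
  have : (Real.pi : ℂ) ≠ 0 := by exact_mod_cast Real.pi_ne_zero
  push_cast
  rw [sub_zero]
  field_simp

lemma parseval_cF {f g : ℝ → ℂ} (hf : Continuous f) (hg : Continuous g) :
    HasSum (fun k => starRingEnd ℂ (cF f k) * cF g k)
      ((1 / (2 * Real.pi) : ℝ) * ∫ x in (0:ℝ)..(2 * Real.pi), starRingEnd ℂ (f x) * g x) := by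
  have hab := two_pi_pos'
  have := Fact.mk (by linarith : 0 < 2 * Real.pi - 0)
  have mem : ∀ f : ℝ → ℂ, Continuous f →
      MemLp f 2 (volume.restrict (Set.Ioc 0 (0 + (2 * Real.pi - 0)))) := by
    intro f hf
    obtain ⟨C, hC⟩ := (isCompact_Icc (a := (0:ℝ))
      (b := 0 + (2 * Real.pi - 0))).exists_bound_of_continuousOn hf.continuousOn
    refine MemLp.of_bound hf.aestronglyMeasurable C ?_
    exact (ae_restrict_iff' measurableSet_Ioc).2 (Filter.Eventually.of_forall fun x hx =>
      hC x (Set.Ioc_subset_Icc_self hx))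
  have h1 := (mem f hf).memLp_liftIoc.haarAddCircle
  have h2 := (mem g hg).memLp_liftIoc.haarAddCircle
  have key := (fourierBasis (T := 2 * Real.pi - 0)).hasSum_inner_mul_inner h1.toLp h2.toLp
  have E1 : (fun k => starRingEnd ℂ (cF f k) * cF g k) = fun i =>
      inner ℂ h1.toLp (fourierBasis (T := 2 * Real.pi - 0) i) *
      inner ℂ (fourierBasis (T := 2 * Real.pi - 0) i) h2.toLp := by
    funext k
    rw [← inner_conj_symm (h1.toLp), ← HilbertBasis.repr_apply_apply, ← HilbertBasis.repr_apply_apply,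
      fourierBasis_repr, fourierBasis_repr]
    rw [fourierCoeff_congr_ae h1.coeFn_toLp, fourierCoeff_congr_ae h2.coeFn_toLp, cF_eq_On, cF_eq_On]
    rfl
  have E2 : ((1 / (2 * Real.pi) : ℝ) * ∫ x in (0:ℝ)..(2 * Real.pi), starRingEnd ℂ (f x) * g x : ℂ)
      = inner ℂ h1.toLp h2.toLp := by
    rw [MeasureTheory.L2.inner_def]
    have e : ∫ a, inner ℂ (h1.toLp _ a) (h2.toLp _ a) ∂AddCircle.haarAddCircle
       = ∫ a, AddCircle.liftIoc (2 * Real.pi - 0) 0 (fun x => starRingEnd ℂ (f x) * g x) a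
          ∂AddCircle.haarAddCircle := by
      apply integral_congr_ae
      filter_upwards [h1.coeFn_toLp, h2.coeFn_toLp] with x hx hy
      rw [hx, hy, RCLike.inner_apply']
      rfl
    rw [e, AddCircle.integral_haarAddCircle, AddCircle.integral_liftIoc_eq_intervalIntegral]
    simp
  rw [E1, E2]
  exact key

lemma cF_deriv {f f' : ℝ → ℂ} (hf : ∀ x, HasDerivAt f (f' x) x) (hc : Continuous f')
    (hp : f (2 * Real.pi) = f 0) (k : ℤ) : cF f' k = Complex.I * k * cF f k := by
  unfold cF
  have hE : ∀ x : ℝ, HasDerivAt (fun x : ℝ => Complex.exp (-Complex.I * k * x))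
      (Complex.exp (-Complex.I * k * x) * (-Complex.I * k)) x := by
    intro x
    have := (((hasDerivAt_id (x:ℂ)).const_mul (-Complex.I * k)).cexp).comp_ofReal
    simpa using this
  have := intervalIntegral.integral_deriv_mul_eq_sub (a := 0) (b := 2 * Real.pi)
    (fun x _ => hf x) (fun x _ => hE x) (hc.intervalIntegrable _ _)
    (Continuous.intervalIntegrable (by fun_prop) _ _)
  have cf : Continuous f := continuous_iff_continuousAt.2 fun x => (hf x).continuousAt
  rw [intervalIntegral.integral_add (Continuous.intervalIntegrable (by fun_prop) _ _)
    (Continuous.intervalIntegrable (by fun_prop) _ _)] at this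
  have e1 : Complex.exp (-Complex.I * k * (2 * Real.pi : ℝ)) = 1 := by
    rw [Complex.exp_eq_one_iff]
    exact ⟨-k, by push_cast; ring⟩
  have e2 : ∫ x in (0:ℝ)..(2 * Real.pi), f x * (Complex.exp (-Complex.I * k * x) * (-Complex.I * k))
     = (∫ x in (0:ℝ)..(2 * Real.pi), f x * Complex.exp (-Complex.I * k * x)) * (-Complex.I * k) := by
    rw [← intervalIntegral.integral_mul_const]
    congr 1; ext x; ring
  rw [e2, e1, hp] at this
  simp only [Complex.ofReal_zero, mul_zero, Complex.exp_zero, sub_self] at this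
  linear_combination ((1 / (2 * Real.pi) : ℝ) : ℂ) * this

lemma cF_mul_zero {a w : ℝ → ℂ} (ha : Continuous a) (hw : Continuous w)
    (h1 : ∀ k : ℤ, k < 0 → cF a k = 0) (h2 : ∀ k : ℤ, k ≤ 0 → cF w k = 0) (n : ℤ) (hn : n ≤ 0) :
    cF (fun x => a x * w x) n = 0 := by
  have P := parseval_cF (f := fun x => starRingEnd ℂ (a x) * Complex.exp (Complex.I * n * x)) (g := w)
    (by fun_prop) hw
  have z : ∀ k : ℤ, starRingEnd ℂ (cF (fun x => starRingEnd ℂ (a x) * Complex.exp (Complex.I * n * x)) k)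
      * cF w k = 0 := by
    intro k
    rcases le_or_gt k 0 with hk | hk
    · rw [h2 k hk, mul_zero]
    · have : starRingEnd ℂ (cF (fun x => starRingEnd ℂ (a x) * Complex.exp (Complex.I * n * x)) k)
        = cF a (n - k) := by
        unfold cF
        rw [map_mul, Complex.conj_ofReal, intervalIntegral.integral_of_le two_pi_pos'.le,
          intervalIntegral.integral_of_le two_pi_pos'.le, ← integral_conj]
        congr 2
        ext x
        simp only [map_mul, Complex.conj_conj, ← Complex.exp_conj, map_neg, Complex.conj_I,
          Complex.conj_ofReal, map_intCast]
        rw [mul_assoc, ← Complex.exp_add]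
        congr 2
        push_cast
        ring
      rw [this, h1 _ (by omega), zero_mul]
  simp only [z] at P
  have := P.unique hasSum_zero
  rw [← this]
  unfold cF
  congr 2
  ext x
  simp only [map_mul, Complex.conj_conj, ← Complex.exp_conj, Complex.conj_I,
          Complex.conj_ofReal, map_intCast]
  ring

lemma cF_add_I {u v : ℝ → ℝ} (hu : Continuous u) (hv : Continuous v) (k : ℤ) :
    cF (fun x => (u x : ℂ) + Complex.I * v x) k = fourierCoef u k + Complex.I * fourierCoef v k := by
  unfold cF fourierCoef
  have : ∀ x : ℝ, ((u x : ℂ) + Complex.I * v x) * Complex.exp (-Complex.I * k * x)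
    = u x * Complex.exp (-Complex.I * k * x)
      + Complex.I * (v x * Complex.exp (-Complex.I * k * x)) := by intro x; ring
  simp_rw [this]
  rw [intervalIntegral.integral_add (Continuous.intervalIntegrable (by fun_prop) _ _)
    (Continuous.intervalIntegrable (by fun_prop) _ _), intervalIntegral.integral_const_mul]
  ring

lemma fourierCoef_deriv_s11 {f f' : ℝ → ℝ} (hf : ∀ x, HasDerivAt f (f' x) x) (hc : Continuous f')
    (hp : f (2 * Real.pi) = f 0) (k : ℤ) : fourierCoef f' k = Complex.I * k * fourierCoef f k := by
  rw [fourierCoef_eq_cF, fourierCoef_eq_cF]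
  exact cF_deriv (fun x => (hf x).ofReal_comp) (by fun_prop) (by rw [hp]) k

lemma cubic_identity {u v u' v' : ℝ → ℝ} (hu : ∀ x, HasDerivAt u (u' x) x)
    (hv : ∀ x, HasDerivAt v (v' x) x) (cu' : Continuous u') (cv' : Continuous v')
    (pu : u (2 * Real.pi) = u 0) (pv : v (2 * Real.pi) = v 0)
    (H : ∀ k : ℤ, fourierCoef v k = -Complex.I * (Int.sign k : ℂ) * fourierCoef u k) :
    ∫ x in (0:ℝ)..(2 * Real.pi), (u x * (u' x ^ 2 - v' x ^ 2) - 2 * (v x * u' x * v' x)) = 0 := by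
  have cu : Continuous u := continuous_iff_continuousAt.2 fun x => (hu x).continuousAt
  have cv : Continuous v := continuous_iff_continuousAt.2 fun x => (hv x).continuousAt
  have ez : ∀ k : ℤ, cF (fun x => (u x : ℂ) + Complex.I * v x) k
      = (1 + (Int.sign k : ℂ)) * fourierCoef u k := by
    intro k
    rw [cF_add_I cu cv, H]
    linear_combination (-(Int.sign k : ℂ) * fourierCoef u k) * Complex.I_mul_I
  have ew : ∀ k : ℤ, cF (fun x => (u' x : ℂ) + Complex.I * v' x) k
      = Complex.I * k * ((1 + (Int.sign k : ℂ)) * fourierCoef u k) := by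
    intro k
    rw [cF_add_I cu' cv', fourierCoef_deriv_s11 hu cu' pu, fourierCoef_deriv_s11 hv cv' pv, H]
    linear_combination (-(Complex.I * k * (Int.sign k : ℂ) * fourierCoef u k)) * Complex.I_mul_I
  have z1 : ∀ k : ℤ, k < 0 → cF (fun x => (u x : ℂ) + Complex.I * v x) k = 0 := by
    intro k hk; rw [ez, Int.sign_eq_neg_one_of_neg hk]; simp
  have z2 : ∀ k : ℤ, k ≤ 0 → cF (fun x => (u' x : ℂ) + Complex.I * v' x) k = 0 := by
    intro k hk
    rw [ew]
    rcases hk.lt_or_eq with hk | hk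
    · rw [Int.sign_eq_neg_one_of_neg hk]; simp
    · simp [hk]
  have s1 := cF_mul_zero (by fun_prop) (by fun_prop) z1 z2
  have s2 := cF_mul_zero (by fun_prop) (by fun_prop) (fun k hk => s1 k hk.le) z2 0 le_rfl
  unfold cF at s2
  have hpi : ((1 / (2 * Real.pi) : ℝ) : ℂ) ≠ 0 := by
    exact_mod_cast (one_div_pos.2 two_pi_pos').ne'
  have s3 := (mul_eq_zero.1 s2).resolve_left hpi
  have s4 := congrArg Complex.re s3
  rw [← Complex.reCLM_apply, ← ContinuousLinearMap.intervalIntegral_comp_comm _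
    (Continuous.intervalIntegrable (by fun_prop) _ _)] at s4
  rw [Complex.zero_re] at s4
  rw [← s4]
  congr 1
  ext x
  simp
  ring

lemma real_parseval {u v : ℝ → ℝ} (hu : Continuous u) (hv : Continuous v) :
    HasSum (fun k => starRingEnd ℂ (fourierCoef u k) * fourierCoef v k)
      (((1 / (2 * Real.pi) : ℝ) * ∫ x in (0:ℝ)..(2 * Real.pi), u x * v x : ℝ) : ℂ) := by
  have := parseval_cF (f := fun x => (u x : ℂ)) (g := fun x => (v x : ℂ)) (by fun_prop) (by fun_prop)
  simp only [Complex.conj_ofReal] at this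
  rw [Complex.ofReal_mul, ← intervalIntegral.integral_ofReal]
  simpa only [Complex.ofReal_mul, fourierCoef_eq_cF] using this

lemma hasDerivAt_param {E : Type*} [NormedAddCommGroup E] [NormedSpace ℝ E] [CompleteSpace E]
    {G Gt : ℝ × ℝ → E} (hG : Continuous G) (hGt : Continuous Gt)
    (hd : ∀ t x, HasDerivAt (fun s => G (s, x)) (Gt (t, x)) t) (t : ℝ) :
    HasDerivAt (fun s => ∫ x in (0:ℝ)..(2 * Real.pi), G (s, x))
      (∫ x in (0:ℝ)..(2 * Real.pi), Gt (t, x)) t := by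
  obtain ⟨C, hC⟩ := ((isCompact_Icc (a := t - 1) (b := t + 1)).prod
    (isCompact_Icc (a := (0:ℝ)) (b := 2 * Real.pi))).exists_bound_of_continuousOn hGt.continuousOn
  refine (intervalIntegral.hasDerivAt_integral_of_dominated_loc_of_deriv_le
    (F := fun s x => G (s, x)) (F' := fun s x => Gt (s, x)) (bound := fun _ => C)
    (s := Set.Icc (t - 1) (t + 1)) (Icc_mem_nhds (by linarith) (by linarith)) ?_ ?_ ?_ ?_ ?_ ?_).2
  · exact Filter.Eventually.of_forall fun s =>
      (Continuous.aestronglyMeasurable (by fun_prop))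
  · exact Continuous.intervalIntegrable (by fun_prop) _ _
  · exact (Continuous.aestronglyMeasurable (by fun_prop))
  · refine Filter.Eventually.of_forall fun x hx s hs => hC _ ⟨hs, ?_⟩
    rw [Set.uIoc_of_le two_pi_pos'.le] at hx
    exact Set.Ioc_subset_Icc_self hx
  · exact intervalIntegrable_const
  · exact Filter.Eventually.of_forall fun x hx s hs => hd s x

lemma hasDerivAt_fourierCoef {G Gt : ℝ × ℝ → ℝ} (hG : Continuous G) (hGt : Continuous Gt)
    (hd : ∀ t x, HasDerivAt (fun s => G (s, x)) (Gt (t, x)) t) (k : ℤ) (t : ℝ) :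
    HasDerivAt (fun s => fourierCoef (fun x => G (s, x)) k) (fourierCoef (fun x => Gt (t, x)) k) t := by
  unfold fourierCoef
  apply HasDerivAt.const_mul
  exact hasDerivAt_param
    (G := fun p => (G p : ℂ) * Complex.exp (-Complex.I * k * (p.2 : ℝ)))
    (Gt := fun p => (Gt p : ℂ) * Complex.exp (-Complex.I * k * (p.2 : ℝ)))
    (by fun_prop) (by fun_prop)
    (fun t x => ((hd t x).ofReal_comp).mul_const
      (Complex.exp (-Complex.I * k * (x : ℝ)))) t

lemma partials {G : ℝ × ℝ → ℝ} (hG : ContDiff ℝ (⊤ : ℕ∞) G) :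
    ∃ Gt Gx : ℝ × ℝ → ℝ, ContDiff ℝ (⊤ : ℕ∞) Gt ∧ ContDiff ℝ (⊤ : ℕ∞) Gx ∧
      (∀ t x, HasDerivAt (fun s => G (s, x)) (Gt (t, x)) t) ∧
      (∀ t x, HasDerivAt (fun y => G (t, y)) (Gx (t, x)) x) := by
  have hd : ∀ p, HasFDerivAt G (fderiv ℝ G p) p := fun p =>
    ((hG.differentiable (by simp)) p).hasFDerivAt
  have hf : ContDiff ℝ (⊤ : ℕ∞) (fderiv ℝ G) := hG.fderiv_right (by simp)
  refine ⟨fun p => fderiv ℝ G p (1, 0), fun p => fderiv ℝ G p (0, 1),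
    hf.clm_apply contDiff_const, hf.clm_apply contDiff_const, fun t x => ?_, fun t x => ?_⟩
  · exact (hd (t, x)).comp_hasDerivAt t ((hasDerivAt_id t).prodMk (hasDerivAt_const t x))
  · exact (hd (t, x)).comp_hasDerivAt x ((hasDerivAt_const x t).prodMk (hasDerivAt_id x))

/-- Ḣ^{1/2} a priori estimate for `θ_t + (1−δ) ℋθ·θ_x + δ (θ ℋθ)_x = 0` with
`δ ∈ [1/2,1]` and `θ ≥ m₀ > 0`: the seminorm `F(t) = 2π ∑_k |k| |θ̂(t,k)|²`
is differentiable with `F′(t) ≤ −m₀ ∫₀^{2π} (θ_x)² dx`. -/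
theorem H_half_estimate_1d_model (δ m₀ : ℝ) (hδ : δ ∈ Set.Icc (1/2 : ℝ) 1)
    (hm₀ : 0 < m₀)
    (θ h : ℝ × ℝ → ℝ)
    (hθ : ContDiff ℝ (⊤ : ℕ∞) θ) (hh : ContDiff ℝ (⊤ : ℕ∞) h)
    (hθper : ∀ t x : ℝ, θ (t, x + 2 * Real.pi) = θ (t, x))
    (hθlb : ∀ p : ℝ × ℝ, m₀ ≤ θ p)
    (hhilb : ∀ t : ℝ, IsHilbertTransformOf (fun x => h (t, x)) (fun x => θ (t, x)))
    (hpde : ∀ t x : ℝ,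
      deriv (fun s => θ (s, x)) t
        + (1 - δ) * h (t, x) * deriv (fun y => θ (t, y)) x
        + δ * deriv (fun y => θ (t, y) * h (t, y)) x = 0) :
    ∀ t : ℝ,
      DifferentiableAt ℝ
        (fun s => 2 * Real.pi *
          ∑' k : ℤ, (|k| : ℝ) * ‖fourierCoef (fun x => θ (s, x)) k‖ ^ 2) t ∧
      deriv (fun s => 2 * Real.pi *
          ∑' k : ℤ, (|k| : ℝ) * ‖fourierCoef (fun x => θ (s, x)) k‖ ^ 2) t ≤
        -m₀ * ∫ x in (0:ℝ)..(2 * Real.pi), (deriv (fun y => θ (t, y)) x) ^ 2 := by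
  obtain ⟨θt, θx, cθt, cθx, dθt, dθx⟩ := partials hθ
  obtain ⟨ht, hx, cht, chx, dht, dhx⟩ := partials hh
  obtain ⟨hxt, _, chxt, _, dhxt, _⟩ := partials chx
  have kθ := hθ.continuous
  have kh := hh.continuous
  have kθt := cθt.continuous
  have kθx := cθx.continuous
  have khx := chx.continuous
  have khxt := chxt.continuous
  have pθ : ∀ t, θ (t, 2 * Real.pi) = θ (t, 0) := fun t => by simpa using hθper t 0
  have ph : ∀ t, h (t, 2 * Real.pi) = h (t, 0) := fun t => by simpa using (hhilb t).2.1 0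
  have hhx : ∀ t k, fourierCoef (fun x => hx (t, x)) k
      = ((|k| : ℝ) : ℂ) * fourierCoef (fun x => θ (t, x)) k := by
    intro t k
    rw [fourierCoef_deriv_s11 (dhx t) (by fun_prop) (ph t), (hhilb t).2.2]
    have : ((k : ℂ) * (Int.sign k : ℂ)) = ((|k| : ℝ) : ℂ) := by
      have := Int.mul_sign_self k
      have h2 : k * k.sign = |k| := by rw [this, Int.abs_eq_natAbs]
      have h3 := congrArg (fun z : ℤ => (z : ℂ)) h2
      simp only [Int.cast_mul] at h3
      rw [h3, ← Int.cast_abs, Complex.ofReal_intCast]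
    rw [← this]
    linear_combination (-(k : ℂ) * (Int.sign k : ℂ) * fourierCoef (fun x => θ (t, x)) k)
      * Complex.I_mul_I
  have hhxt : ∀ t k, fourierCoef (fun x => hxt (t, x)) k
      = ((|k| : ℝ) : ℂ) * fourierCoef (fun x => θt (t, x)) k := by
    intro t k
    have e1 := hasDerivAt_fourierCoef khx khxt dhxt k t
    have e2 := (hasDerivAt_fourierCoef kθ kθt dθt k t).const_mul ((|k| : ℝ) : ℂ)
    simp_rw [hhx] at e1
    exact e1.unique e2
  have hF : (fun s => 2 * Real.pi *
          ∑' k : ℤ, (|k| : ℝ) * ‖fourierCoef (fun x => θ (s, x)) k‖ ^ 2)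
      = fun s => ∫ x in (0:ℝ)..(2 * Real.pi), θ (s, x) * hx (s, x) := by
    ext s
    have P := real_parseval (u := fun x => θ (s, x)) (v := fun x => hx (s, x))
      (by fun_prop) (by fun_prop)
    have e : ∀ k : ℤ, starRingEnd ℂ (fourierCoef (fun x => θ (s, x)) k)
        * fourierCoef (fun x => hx (s, x)) k
        = (((|k| : ℝ) * ‖fourierCoef (fun x => θ (s, x)) k‖ ^ 2 : ℝ) : ℂ) := by
      intro k
      rw [hhx]
      push_cast
      rw [← Complex.conj_mul']
      ring
    simp only [e] at P
    rw [(Complex.hasSum_ofReal.1 P).tsum_eq]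
    have := two_pi_pos'.ne'
    field_simp
  have sym : ∀ t, ∫ x in (0:ℝ)..(2 * Real.pi), θ (t, x) * hxt (t, x)
      = ∫ x in (0:ℝ)..(2 * Real.pi), hx (t, x) * θt (t, x) := by
    intro t
    have P1 := real_parseval (u := fun x => θ (t, x)) (v := fun x => hxt (t, x))
      (by fun_prop) (by fun_prop)
    have P2 := real_parseval (u := fun x => hx (t, x)) (v := fun x => θt (t, x))
      (by fun_prop) (by fun_prop)
    have e : ∀ k : ℤ, starRingEnd ℂ (fourierCoef (fun x => θ (t, x)) k)
        * fourierCoef (fun x => hxt (t, x)) k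
        = starRingEnd ℂ (fourierCoef (fun x => hx (t, x)) k)
        * fourierCoef (fun x => θt (t, x)) k := by
      intro k
      rw [hhx, hhxt, map_mul, Complex.conj_ofReal]
      ring
    simp only [e] at P1
    have := Complex.ofReal_injective (P1.unique P2)
    exact mul_left_cancel₀ (one_div_pos.2 two_pi_pos').ne' this
  intro t
  have D := hasDerivAt_param (G := fun p => θ p * hx p)
    (Gt := fun p => θt p * hx p + θ p * hxt p) (by fun_prop) (by fun_prop)
    (fun t x => (dθt t x).mul (dhxt t x)) t
  rw [hF]
  refine ⟨D.differentiableAt, ?_⟩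
  rw [D.deriv]
  have ii : ∀ f : ℝ → ℝ, Continuous f → IntervalIntegrable f volume 0 (2 * Real.pi) :=
    fun f hf => hf.intervalIntegrable _ _
  rw [intervalIntegral.integral_add (ii _ (by fun_prop)) (ii _ (by fun_prop)), sym t,
    ← intervalIntegral.integral_add (ii _ (by fun_prop)) (ii _ (by fun_prop))]
  have C := cubic_identity (dθx t) (dhx t) (by fun_prop) (by fun_prop) (pθ t) (ph t) (hhilb t).2.2
  have dd : ∀ x, deriv (fun y => θ (t, y)) x = θx (t, x) := fun x => (dθx t x).deriv
  simp_rw [dd]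
  rw [← intervalIntegral.integral_const_mul]
  refine ((sub_zero _).symm.trans (congrArg _ C.symm)).trans_le ?_
  rw [← intervalIntegral.integral_sub (ii _ (by fun_prop)) (ii _ (by fun_prop))]
  apply intervalIntegral.integral_mono_on two_pi_pos'.le (ii _ (by fun_prop)) (ii _ (by fun_prop))
  intro x _
  have p := hpde t x
  rw [(dθt t x).deriv, dd x, ((dθx t x).fun_mul (dhx t x)).deriv] at p
  have q : θt (t, x) = -(h (t, x) * θx (t, x)) - δ * (θ (t, x) * hx (t, x)) := by
    linear_combination p
  rw [q]
  have hl := hθlb (t, x)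
  have n1 : 0 ≤ (θ (t, x) - m₀) * θx (t, x) ^ 2 := mul_nonneg (by linarith) (sq_nonneg _)
  have n2 : 0 ≤ (2 * δ - 1) * (θ (t, x) * hx (t, x) ^ 2) :=
    mul_nonneg (by linarith [hδ.1]) (mul_nonneg (by linarith) (sq_nonneg _))
  nlinarith [n1, n2]
end

section
/- Let n ≥ 1 and γ > 0. There exists a constant c > 0, depending only on n and γ, with the following property: for every measurable 2πℤⁿ-periodic function f : ℝⁿ → [0,∞) and every point x₀ ∈ ℝⁿ such that f(x) ≤ f(x₀) for all x ∈ ℝⁿ, f(x₀) > 0, 0 < ∫_{[−π,π]ⁿ} f(y) dy, and ∫_{[−π,π]ⁿ} f(y) dy ≤ 2^{n−2} πⁿ f(x₀), one has ∫_{[−π,π]ⁿ} ( f(x₀) − f(x₀ − y) ) / |y|^{n+γ} dy ≥ c · f(x₀)^{1+γ/n} / ( ∫_{[−π,π]ⁿ} f(y) dy )^{γ/n}. (The integrand is nonnegative since f attains its maximum at x₀, so the integral is well defined in [0,∞].) -/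
open MeasureTheory

/-- The lattice `2πℤⁿ` as the image of `ℤⁿ`. -/
noncomputable def latHom (n : ℕ) : (Fin n → ℤ) →+ EuclideanSpace ℝ (Fin n) where
  toFun k := (WithLp.equiv 2 (Fin n → ℝ)).symm (fun i => 2 * Real.pi * (k i : ℝ))
  map_zero' := by ext i; simp
  map_add' a b := by ext i; simp [mul_add]

lemma latHom_apply (n : ℕ) (k : Fin n → ℤ) (i : Fin n) :
    latHom n k i = 2 * Real.pi * (k i : ℝ) := rfl

/-- Half-open cube. -/
def hoCube {n : ℕ} (a : EuclideanSpace ℝ (Fin n)) (s : ℝ) : Set (EuclideanSpace ℝ (Fin n)) :=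
  {y | ∀ i, y i ∈ Set.Ico (a i) (a i + s)}

lemma measurable_coord {n : ℕ} (i : Fin n) :
    Measurable (fun y : EuclideanSpace ℝ (Fin n) => y i) := by fun_prop

lemma hoCube_meas {n : ℕ} (a : EuclideanSpace ℝ (Fin n)) (s : ℝ) :
    MeasurableSet (hoCube a s) := by
  have : hoCube a s = ⋂ i, (fun y : EuclideanSpace ℝ (Fin n) => y i) ⁻¹' Set.Ico (a i) (a i + s) := by
    ext y; simp [hoCube]
  rw [this]
  exact MeasurableSet.iInter fun i => measurable_coord i measurableSet_Ico

lemma hoCube_fund {n : ℕ} (a : EuclideanSpace ℝ (Fin n)) :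
    IsAddFundamentalDomain (latHom n).range (hoCube a (2 * Real.pi)) volume := by
  apply IsAddFundamentalDomain.mk' (hoCube_meas a _).nullMeasurableSet
  intro x
  have h := fun i => existsUnique_add_zsmul_mem_Ico (mul_pos two_pos Real.pi_pos) (x i) (a i)
  choose k hk huk using h
  refine ⟨⟨latHom n k, ⟨k, rfl⟩⟩, ?_, ?_⟩
  · intro i
    have := hk i
    simp only [zsmul_eq_mul] at this
    change latHom n k i + x i ∈ _
    rw [latHom_apply, add_comm _ (x i), mul_comm _ (k i : ℝ)]
    exact this
  · rintro ⟨_, ⟨m, rfl⟩⟩ hm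
    have : m = k := by
      funext i
      apply huk i
      have := hm i
      change latHom n m i + x i ∈ _ at this
      rw [latHom_apply, add_comm _ (x i), mul_comm _ (m i : ℝ)] at this
      simpa only [zsmul_eq_mul] using this
    subst this
    rfl

lemma hoCube_lintegral_eq {n : ℕ} (a b : EuclideanSpace ℝ (Fin n))
    (g : EuclideanSpace ℝ (Fin n) → ENNReal)
    (hg : ∀ x k, g (x + latHom n k) = g x) :
    ∫⁻ y in hoCube a (2 * Real.pi), g y = ∫⁻ y in hoCube b (2 * Real.pi), g y := by
  have : Countable (latHom n).range := by
    have : Function.Surjective (latHom n).rangeRestrict := (latHom n).rangeRestrict_surjective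
    exact this.countable
  refine (hoCube_fund a).setLIntegral_eq (hoCube_fund b) g ?_
  rintro ⟨_, ⟨k, rfl⟩⟩ x
  change g (latHom n k + x) = g x
  rw [add_comm, hg]

lemma ioc_vol {n : ℕ} (r : ℝ) (hr : 0 < r) :
    volume {y : EuclideanSpace ℝ (Fin n) | ∀ i, y i ∈ Set.Ioc (-r) r}
      = ENNReal.ofReal ((2 * r) ^ n) := by
  have h := (EuclideanSpace.volume_preserving_symm_measurableEquiv_toLp (Fin n)).measure_preimage
    (s := Set.pi Set.univ fun _ => Set.Ioc (-r) r)
    (MeasurableSet.univ_pi fun _ => measurableSet_Ioc).nullMeasurableSet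
  rw [Real.volume_pi_Ioc] at h
  have e : {y : EuclideanSpace ℝ (Fin n) | ∀ i, y i ∈ Set.Ioc (-r) r} =
    (MeasurableEquiv.toLp 2 (Fin n → ℝ)).symm ⁻¹' (Set.pi Set.univ fun _ => Set.Ioc (-r) r) := by
    ext y; simp
  rw [e, h, Finset.prod_const, Finset.card_univ, Fintype.card_fin,
    ENNReal.ofReal_pow (by positivity)]
  congr 2; ring

theorem fractional_laplacian_lower_bound_at_max (n : ℕ) (hn : 1 ≤ n)
    (γ : ℝ) (hγ : 0 < γ) :
    ∃ c : ℝ, 0 < c ∧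
      ∀ (f : EuclideanSpace ℝ (Fin n) → ℝ), Measurable f → (∀ x, 0 ≤ f x) →
        (∀ (x : EuclideanSpace ℝ (Fin n)) (k : Fin n → ℤ),
          f (x + (WithLp.equiv 2 (Fin n → ℝ)).symm (fun i => 2 * Real.pi * (k i : ℝ))) = f x) →
        ∀ x₀ : EuclideanSpace ℝ (Fin n), (∀ x, f x ≤ f x₀) → 0 < f x₀ →
        (0 < ∫ y in {y : EuclideanSpace ℝ (Fin n) | ∀ i, y i ∈ Set.Icc (-Real.pi) Real.pi},
            f y) →
        (∫ y in {y : EuclideanSpace ℝ (Fin n) | ∀ i, y i ∈ Set.Icc (-Real.pi) Real.pi},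
            f y) ≤ (2:ℝ) ^ ((n:ℝ) - 2) * Real.pi ^ n * f x₀ →
        ENNReal.ofReal (c * f x₀ ^ (1 + γ / n) /
            (∫ y in {y : EuclideanSpace ℝ (Fin n) | ∀ i, y i ∈ Set.Icc (-Real.pi) Real.pi},
              f y) ^ (γ / n)) ≤
          ∫⁻ y in {y : EuclideanSpace ℝ (Fin n) | ∀ i, y i ∈ Set.Icc (-Real.pi) Real.pi},
            ENNReal.ofReal ((f x₀ - f (x₀ - y)) / ‖y‖ ^ ((n : ℝ) + γ)) := by
  have hn0 : (0:ℝ) < n := by exact_mod_cast hn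
  set K : ℝ := (2:ℝ) ^ ((n:ℝ) - 2) with hK
  have hKpos : 0 < K := by positivity
  have h4K : (2:ℝ) ^ n = 4 * K := by
    rw [hK, Real.rpow_sub two_pos, Real.rpow_natCast]; norm_num; ring
  refine ⟨K ^ (1 + γ / n) / (√n) ^ ((n:ℝ) + γ), by positivity, ?_⟩
  intro f hfm hf0 hper x₀ hmax hM hL hle
  set Q := {y : EuclideanSpace ℝ (Fin n) | ∀ i, y i ∈ Set.Icc (-Real.pi) Real.pi} with hQ
  set L := ∫ y in Q, f y with hLdef
  set M := f x₀ with hMdef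
  have hint : IntegrableOn f Q := by
    by_contra h
    rw [hLdef, integral_undef h] at hL
    exact lt_irrefl _ hL
  have hLl : ∫⁻ y in Q, ENNReal.ofReal (f y) = ENNReal.ofReal L :=
    (ofReal_integral_eq_lintegral_ofReal hint (Filter.Eventually.of_forall hf0)).symm
  set r : ℝ := (L / (K * M)) ^ (1 / (n:ℝ)) with hr
  have hA : 0 < L / (K * M) := by positivity
  have hrpos : 0 < r := by positivity
  have hrn : r ^ n = L / (K * M) := by
    rw [hr, ← Real.rpow_natCast, ← Real.rpow_mul hA.le,
      one_div_mul_cancel hn0.ne', Real.rpow_one]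
  have hrpi : r ≤ Real.pi := by
    refine le_of_pow_le_pow_left₀ (n := n) (by omega) Real.pi_pos.le ?_
    rw [hrn, div_le_iff₀ (by positivity)]; linarith
  have hrg : r ^ ((n:ℝ) + γ) = (L / (K * M)) ^ (1 + γ / n) := by
    rw [hr, ← Real.rpow_mul hA.le]; congr 1; field_simp
  set C := {y : EuclideanSpace ℝ (Fin n) | ∀ i, y i ∈ Set.Ioc (-r) r} with hC
  have hCm : MeasurableSet C := by
    have : C = ⋂ i, (fun y : EuclideanSpace ℝ (Fin n) => y i) ⁻¹' Set.Ioc (-r) r := by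
      ext y; simp [hC]
    rw [this]
    exact MeasurableSet.iInter fun i => measurable_coord i measurableSet_Ioc
  have hCv : volume C = ENNReal.ofReal (4 * L / M) := by
    rw [hC, ioc_vol r hrpos, mul_pow, hrn, h4K]; congr 1; field_simp
  -- periodicity bound
  have hCf : ∫⁻ y in C, ENNReal.ofReal (f (x₀ - y)) ≤ ENNReal.ofReal L := by
    set a : EuclideanSpace ℝ (Fin n) := WithLp.toLp 2 (fun i => x₀ i - Real.pi)
    set b : EuclideanSpace ℝ (Fin n) := WithLp.toLp 2 (fun _ => - Real.pi)
    calc ∫⁻ y in C, ENNReal.ofReal (f (x₀ - y))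
        ≤ ∫⁻ y, (hoCube a (2 * Real.pi)).indicator (fun z => ENNReal.ofReal (f z)) (x₀ - y) := by
          rw [← lintegral_indicator hCm]
          refine lintegral_mono fun y => ?_
          by_cases hy : y ∈ C
          · have : x₀ - y ∈ hoCube a (2 * Real.pi) := by
              intro i
              have := hy i
              have e : a i = x₀ i - Real.pi := rfl
              rw [e, PiLp.sub_apply]
              constructor <;> linarith [this.1, this.2]
            rw [Set.indicator_of_mem hy, Set.indicator_of_mem this]
          · rw [Set.indicator_of_notMem hy]; exact zero_le
      _ = ∫⁻ z in hoCube a (2 * Real.pi), ENNReal.ofReal (f z) := by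
          rw [lintegral_sub_left_eq_self
            (fun y => (hoCube a (2 * Real.pi)).indicator (fun z => ENNReal.ofReal (f z)) y) x₀,
            lintegral_indicator (hoCube_meas _ _)]
      _ = ∫⁻ z in hoCube b (2 * Real.pi), ENNReal.ofReal (f z) :=
          hoCube_lintegral_eq a b _ fun x k => by
            rw [show f (x + latHom n k) = f x from hper x k]
      _ ≤ ∫⁻ z in Q, ENNReal.ofReal (f z) := by
          refine lintegral_mono_set fun y hy i => ?_
          have := hy i
          have e : b i = - Real.pi := rfl
          rw [e] at this
          constructor <;> linarith [this.1, this.2]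
      _ = _ := hLl
  set U1 := {y | y ∈ C ∧ f (x₀ - y) < M / 2} with hU1
  set U2 := {y | y ∈ C ∧ M / 2 ≤ f (x₀ - y)} with hU2
  have hfs : Measurable fun y => f (x₀ - y) := hfm.comp (measurable_const.sub measurable_id)
  have hU1m : MeasurableSet U1 := hCm.inter (measurableSet_lt hfs measurable_const)
  have hU2m : MeasurableSet U2 := hCm.inter (measurableSet_le measurable_const hfs)
  have hU2v : volume U2 ≤ ENNReal.ofReal (2 * L / M) := by
    have h1 : ENNReal.ofReal (M / 2) * volume U2 ≤ ENNReal.ofReal L := by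
      calc _ = ∫⁻ y in U2, ENNReal.ofReal (M / 2) := by rw [setLIntegral_const]
        _ ≤ ∫⁻ y in U2, ENNReal.ofReal (f (x₀ - y)) :=
          setLIntegral_mono' hU2m fun y hy => ENNReal.ofReal_le_ofReal hy.2
        _ ≤ ∫⁻ y in C, ENNReal.ofReal (f (x₀ - y)) := lintegral_mono_set fun y hy => hy.1
        _ ≤ _ := hCf
    have h2 : ENNReal.ofReal (2 * L / M) = ENNReal.ofReal L / ENNReal.ofReal (M / 2) := by
      rw [← ENNReal.ofReal_div_of_pos (by positivity)]; congr 1; field_simp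
    rw [h2, ENNReal.le_div_iff_mul_le (by left; simp [hM]) (by left; simp), mul_comm]
    exact h1
  have hU1v : ENNReal.ofReal (2 * L / M) ≤ volume U1 := by
    have hsum : volume C ≤ volume U1 + volume U2 := by
      refine (measure_mono ?_).trans (measure_union_le U1 U2)
      intro y hy
      rcases lt_or_ge (f (x₀ - y)) (M / 2) with h | h
      · exact Or.inl ⟨hy, h⟩
      · exact Or.inr ⟨hy, h⟩
    have h3 : ENNReal.ofReal (2 * L / M) + ENNReal.ofReal (2 * L / M) ≤
        volume U1 + ENNReal.ofReal (2 * L / M) := by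
      rw [← ENNReal.ofReal_add (by positivity) (by positivity)]
      calc _ = volume C := by rw [hCv]; congr 1; ring
        _ ≤ _ := hsum.trans (by gcongr)
    exact (ENNReal.add_le_add_iff_right ENNReal.ofReal_ne_top).1 h3
  have hU1Q : U1 ⊆ Q := by
    intro y hy i
    have := hy.1 i
    constructor <;> linarith [this.1, this.2]
  set D : ℝ := (√n * r) ^ ((n:ℝ) + γ) with hD
  have hsn : 0 < √(n:ℝ) := by positivity
  have hDpos : 0 < D := by positivity
  calc _ = ENNReal.ofReal ((M / 2) / D) * ENNReal.ofReal (2 * L / M) := by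
        rw [← ENNReal.ofReal_mul (by positivity)]
        congr 1
        rw [hD, Real.mul_rpow hsn.le hrpos.le, hrg, Real.div_rpow hL.le (by positivity),
          Real.mul_rpow hKpos.le hM.le, Real.rpow_add hL, Real.rpow_one]
        field_simp
    _ ≤ ENNReal.ofReal ((M / 2) / D) * volume U1 := by gcongr
    _ = ∫⁻ y in U1, ENNReal.ofReal ((M / 2) / D) := by rw [setLIntegral_const]
    _ ≤ ∫⁻ y in U1, ENNReal.ofReal ((M - f (x₀ - y)) / ‖y‖ ^ ((n : ℝ) + γ)) := by
        refine setLIntegral_mono' hU1m fun y hy => ENNReal.ofReal_le_ofReal ?_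
        have hy0 : y ≠ 0 := by
          rintro rfl
          have := hy.2
          rw [sub_zero] at this
          linarith
        have hyn : 0 < ‖y‖ := norm_pos_iff.2 hy0
        have hyr : ‖y‖ ≤ √n * r := by
          rw [EuclideanSpace.norm_eq, ← Real.sqrt_sq hrpos.le, ← Real.sqrt_mul hn0.le]
          apply Real.sqrt_le_sqrt
          calc ∑ i, ‖y i‖ ^ 2 ≤ ∑ i : Fin n, r ^ 2 := by
                refine Finset.sum_le_sum fun i _ => ?_
                have := hy.1 i
                have : ‖y i‖ ≤ r := abs_le.2 ⟨this.1.le, this.2⟩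
                gcongr
            _ = _ := by simp
        have := hy.2
        apply div_le_div₀ (by linarith) (by linarith) (by positivity)
        exact Real.rpow_le_rpow hyn.le hyr (by positivity)
    _ ≤ _ := lintegral_mono_set hU1Q
end
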